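/- Let Z ⊆ ℙ^{r'} (over ℂ) be a smooth Severi variety (projectable, with dim(Z) = (2/3)(r' − 2)), let b ≥ 0, set N = r' + b, let Z' ⊆ ℙ^{N+1} be the cone over Z with vertex a linear ℙ^b, and let X ⊆ ℙ^N be the generic (isomorphic) projection of Z'. Then dim(X) = (1/3)(2N + b − 1), dim Sing(X) = b, and X is not linearly normal. In particular the bound dim(X) > (1/3)(2N + b − 1) in Corollary 4 is sharp. -/

import Mathlib

/- Background for [Lopez-Ran, "On the irreducibility of secant cones, and an application
to linear normality"]: a concrete model of complex projective geometry.  Projective space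
`ℙ^r(ℂ)` is the projectivization of `ℂ^{r+1}`, equipped with the Zariski topology;
subvarieties are (closed, irreducible) subsets; tangent spaces, smoothness, the invariant
`σ(Y)`, secant varieties/cones, generic linear projections and their double loci, and
linear normality are all defined from first principles below. -/

open MvPolynomial Set

noncomputable section

/-- Complex projective space of lines in `ℂⁿ` (so of projective dimension `n - 1`). -/
abbrev PrV (n : ℕ) : Type := Projectivization ℂ (Fin n → ℂ)

/-- `ℙ^r` over `ℂ`. -/
abbrev Pr (r : ℕ) : Type := PrV (r + 1)

/-- The vanishing locus in projective space of a polynomial, defined via all nonzero lifts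
(for a homogeneous polynomial this is the usual projective zero locus). -/
def pZero {n : ℕ} (f : MvPolynomial (Fin n) ℂ) : Set (PrV n) :=
  {x | ∀ v : Fin n → ℂ, ∀ hv : v ≠ 0, Projectivization.mk ℂ v hv = x → eval v f = 0}

/-- The Zariski topology on complex projective space. -/
instance prTop (n : ℕ) : TopologicalSpace (PrV n) :=
  TopologicalSpace.generateFrom {U | ∃ f : MvPolynomial (Fin n) ℂ, U = (pZero f)ᶜ}

/-- The Zariski topology on the affine space `ℂ^σ`. -/
def affTop (σ : Type) : TopologicalSpace (σ → ℂ) :=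
  TopologicalSpace.generateFrom {U | ∃ f : MvPolynomial σ ℂ, U = {v | eval v f ≠ 0}}

/-- A property holds generically (on a dense Zariski-open set) on the affine space `ℂ^σ`. -/
def GenericAff {σ : Type} (P : (σ → ℂ) → Prop) : Prop :=
  ∃ U : Set (σ → ℂ), @IsOpen _ (affTop σ) U ∧ @Dense _ (affTop σ) U ∧ ∀ v ∈ U, P v

/-- The projective line through two points (their linear span); for `x = y` this is `{x}`. -/
def lineThrough {n : ℕ} (x y : PrV n) : Set (PrV n) :=
  {z | z.rep ∈ Submodule.span ℂ ({x.rep, y.rep} : Set (Fin n → ℂ))}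

/-- The projective linear subspace associated to a linear subspace `W ⊆ ℂⁿ`. -/
def projSub {n : ℕ} (W : Submodule ℂ (Fin n → ℂ)) : Set (PrV n) := {x | x.rep ∈ W}

/-- The secant variety of `Y`: the (closure of the) union of all lines spanned by pairs of
distinct points of `Y`, i.e. the union of all secant lines of `Y`. -/
def secantVariety {n : ℕ} (Y : Set (PrV n)) : Set (PrV n) :=
  closure (⋃ x ∈ Y, ⋃ y ∈ Y, ⋃ _ : x ≠ y, lineThrough x y)

/-- `Y` is projectable if its secant variety is not all of projective space. -/
def Projectable {n : ℕ} (Y : Set (PrV n)) : Prop := secantVariety Y ≠ Set.univ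

/-- Hyperplanes in projective space. -/
def IsHyperplane {n : ℕ} (H : Set (PrV n)) : Prop :=
  ∃ φ : (Fin n → ℂ) →ₗ[ℂ] ℂ, φ ≠ 0 ∧ H = {x | φ x.rep = 0}

/-- A set in projective space is nondegenerate if it is contained in no hyperplane. -/
def NondegenerateSet {n : ℕ} (Y : Set (PrV n)) : Prop :=
  ∀ H : Set (PrV n), IsHyperplane H → ¬ Y ⊆ H

/-- Dimension of a subset of projective space: the Krull dimension of the subspace
topology. -/
def pdim {n : ℕ} (S : Set (PrV n)) : WithBot ℕ∞ := topologicalKrullDim S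

/-- The homogeneous ideal of `Y` (as a set): all polynomials all of whose lifts vanish on
the affine cone of `Y`. -/
def homIdeal {n : ℕ} (Y : Set (PrV n)) : Set (MvPolynomial (Fin n) ℂ) := {f | Y ⊆ pZero f}

/-- The differential of a polynomial at a point of `ℂⁿ`, as a linear form. -/
def jacLin {n : ℕ} (f : MvPolynomial (Fin n) ℂ) (v : Fin n → ℂ) : (Fin n → ℂ) →ₗ[ℂ] ℂ :=
  ∑ i, eval v (pderiv i f) • LinearMap.proj i

/-- The affine tangent space of the cone over `Y` at `v`: the common kernel of the
differentials of all elements of the homogeneous ideal of `Y`. -/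
def affTangent {n : ℕ} (Y : Set (PrV n)) (v : Fin n → ℂ) : Submodule ℂ (Fin n → ℂ) :=
  ⨅ f ∈ homIdeal Y, LinearMap.ker (jacLin f v)

/-- The embedded projective tangent space `T_x Y ⊆ ℙⁿ⁻¹`. -/
def projTangent {n : ℕ} (Y : Set (PrV n)) (x : PrV n) : Set (PrV n) :=
  projSub (affTangent Y x.rep)

/-- `x` is a smooth point of `Y` if the affine tangent space of the cone has the expected
dimension `dim Y + 1`. -/
def IsSmoothPt {n : ℕ} (Y : Set (PrV n)) (x : PrV n) : Prop :=
  ((Module.finrank ℂ (affTangent Y x.rep) : ℕ∞) : WithBot ℕ∞) = pdim Y + 1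

/-- The smooth locus `Y_smooth` of `Y`. -/
def smoothLocus {n : ℕ} (Y : Set (PrV n)) : Set (PrV n) := {x ∈ Y | IsSmoothPt Y x}

/-- The singular locus of `Y`. -/
def singLocus {n : ℕ} (Y : Set (PrV n)) : Set (PrV n) := Y \ smoothLocus Y

/-- `Y` is smooth if every point of `Y` is a smooth point. -/
def IsSmoothSet {n : ℕ} (Y : Set (PrV n)) : Prop := ∀ x ∈ Y, IsSmoothPt Y x

/-- A divisor on `Y`: an irreducible closed subvariety of `Y` of codimension one. -/
def IsDivisorOn {n : ℕ} (W Y : Set (PrV n)) : Prop :=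
  W ⊆ Y ∧ IsIrreducible W ∧ closure W ∩ Y = W ∧ pdim W + 1 = pdim Y

/-- `σ(Y)`: the maximal dimension of a subvariety `Z` of the smooth locus of `Y` which
contains a generic point of some divisor on `Y` (i.e. is dense in some divisor), and such
that all embedded tangent spaces `T_y Y`, `y ∈ Z`, lie in a fixed hyperplane. -/
def sigmaY {n : ℕ} (Y : Set (PrV n)) : WithBot ℕ∞ :=
  sSup { d | ∃ Z : Set (PrV n), Z ⊆ smoothLocus Y ∧ IsIrreducible Z ∧
      (∃ W, IsDivisorOn W Y ∧ W ⊆ closure (Z ∩ W)) ∧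
      (∃ H, IsHyperplane H ∧ ∀ y ∈ Z, projTangent Y y ⊆ H) ∧ pdim Z = d }

/-- The ideal of polynomials vanishing (in all lifts) on the affine cone over `Y`. -/
def idealOf {n : ℕ} (Y : Set (PrV n)) : Ideal (MvPolynomial (Fin n) ℂ) where
  carrier := homIdeal Y
  add_mem' := by
    intro f g hf hg x hx v hv hvx
    have h1 := hf hx v hv hvx
    have h2 := hg hx v hv hvx
    simp [map_add, h1, h2]
  zero_mem' := by intro x hx v hv hvx; simp
  smul_mem' := by
    intro c f hf x hx v hv hvx
    have h1 := hf hx v hv hvx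
    simp [smul_eq_mul, map_mul, h1]

instance kerEvalPrime {n : ℕ} (v : Fin n → ℂ) :
    (RingHom.ker ((aeval v : MvPolynomial (Fin n) ℂ →ₐ[ℂ] ℂ) :
      MvPolynomial (Fin n) ℂ →+* ℂ)).IsPrime :=
  RingHom.ker_isPrime _

/-- The local ring of the affine space `ℂⁿ` at the point `v`. -/
abbrev polyAtPoint {n : ℕ} (v : Fin n → ℂ) : Type :=
  Localization.AtPrime (RingHom.ker ((aeval v : MvPolynomial (Fin n) ℂ →ₐ[ℂ] ℂ) :
    MvPolynomial (Fin n) ℂ →+* ℂ))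

/-- The local ring of the affine cone over `Y` at a (nonzero) point `v` of the cone. -/
abbrev coneLocalRing {n : ℕ} (Y : Set (PrV n)) (v : Fin n → ℂ) : Type :=
  polyAtPoint v ⧸
    (Ideal.map (algebraMap (MvPolynomial (Fin n) ℂ) (polyAtPoint v)) (idealOf Y))

/-- A normal (irreducible, closed) subvariety of projective space: all local rings of its
affine cone at points of the punctured cone are integrally closed domains. -/
def IsNormalVariety {n : ℕ} (Y : Set (PrV n)) : Prop :=
  IsClosed Y ∧ IsIrreducible Y ∧
    ∀ x ∈ Y, IsDomain (coneLocalRing Y x.rep) ∧ IsIntegrallyClosed (coneLocalRing Y x.rep)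

/-- The scheme-theoretic double locus of the projection of `Y` away from the projective
linear subspace `ℙ(W)`: points `y ∈ Y` such that the fibre of the projection through `y`
(the span of `ℙ(W)` and `y`) meets `Y` in a subscheme different from the single reduced
point `y`: either it contains a second point of `Y`, or it is tangent to `Y` at `y`. -/
def doubleLocus {r : ℕ} (Y : Set (Pr r)) (W : Submodule ℂ (Fin (r+1) → ℂ)) : Set (Pr r) :=
  {y | y ∈ Y ∧
    ((∃ y' ∈ Y, y' ≠ y ∧ y'.rep ∈ W ⊔ Submodule.span ℂ {y.rep}) ∨
      affTangent Y y.rep ⊓ (W ⊔ Submodule.span ℂ {y.rep}) ≠ Submodule.span ℂ {y.rep})}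

/-- The linear subspace spanned by a `(k+1)`-tuple of vectors of `ℂ^{r+1}` (used to
parametrize generic linear subspaces of projective dimension `k`). -/
def spanOfTuple {r k : ℕ} (v : Fin (k+1) × Fin (r+1) → ℂ) :
    Submodule ℂ (Fin (r+1) → ℂ) :=
  Submodule.span ℂ (Set.range fun i : Fin (k+1) => fun j => v (i, j))

/-- The secant cone of `Y` at `z`: the closure of the union of all secant lines of `Y`
passing through `z`. -/
def secantCone {r : ℕ} (Y : Set (Pr r)) (z : Pr r) : Set (Pr r) :=
  closure (⋃ x ∈ Y, ⋃ y ∈ Y, ⋃ _ : x ≠ y, ⋃ _ : z ∈ lineThrough x y, lineThrough x y)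

/-- `Y` has the irreducible secant cone (ISC) property: the secant cone of `Y` at a generic
point of `ℙ^r` (equivalently, the generic fibre of `f : I_Y → ℙ^r`) is irreducible. -/
def ISC {r : ℕ} (Y : Set (Pr r)) : Prop :=
  ∃ U : Set (Pr r), IsOpen U ∧ Dense U ∧ ∀ z ∈ U, IsIrreducible (secantCone Y z)

/-- The outer (Segre) product of two vectors. -/
def outerVec {a b : ℕ} (v : Fin a → ℂ) (w : Fin b → ℂ) : Fin (a * b) → ℂ :=
  fun k => v (finProdFinEquiv.symm k).1 * w (finProdFinEquiv.symm k).2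

lemma outerVec_ne_zero {a b : ℕ} {v : Fin a → ℂ} {w : Fin b → ℂ}
    (hv : v ≠ 0) (hw : w ≠ 0) : outerVec v w ≠ 0 := by
  obtain ⟨i, hi⟩ := Function.ne_iff.mp hv
  obtain ⟨j, hj⟩ := Function.ne_iff.mp hw
  intro h
  have h2 := congrFun h (finProdFinEquiv (i, j))
  simp only [outerVec, Equiv.symm_apply_apply, Pi.zero_apply] at h2
  rcases mul_eq_zero.mp h2 with h3 | h3
  · exact hi h3
  · exact hj h3

/-- The Segre embedding of a product of projective spaces. -/
def segre {a b : ℕ} (p : PrV a × PrV b) : PrV (a * b) :=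
  Projectivization.mk ℂ (outerVec p.1.rep p.2.rep)
    (outerVec_ne_zero p.1.rep_nonzero p.2.rep_nonzero)

/-- The Zariski topology on a product of two projective spaces (induced via the Segre
embedding). -/
def pairTop (r : ℕ) : TopologicalSpace (Pr r × Pr r) :=
  TopologicalSpace.induced segre (prTop ((r+1) * (r+1)))

/-- Zariski closure in the product of two projective spaces. -/
def closureP {r : ℕ} (S : Set (Pr r × Pr r)) : Set (Pr r × Pr r) :=
  segre ⁻¹' closure (segre '' S)

/-- Zariski irreducibility of a subset of the product of two projective spaces. -/
def IsIrreducibleP {r : ℕ} (S : Set (Pr r × Pr r)) : Prop :=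
  IsIrreducible (closure (segre '' S))

/-- Zariski connectedness of a subset of the product of two projective spaces. -/
def IsConnectedP {r : ℕ} (S : Set (Pr r × Pr r)) : Prop :=
  IsConnected (segre '' S)

/-- Dimension of a subset of the product of two projective spaces. -/
def pdimP {r : ℕ} (S : Set (Pr r × Pr r)) : WithBot ℕ∞ := pdim (segre '' S)

/-- The (ordered-pairs model of the) fibre of `f : I_Y → ℙ^r` over `z ∈ ℙ^r`: pairs of
distinct points of `Y` whose secant line passes through `z`, together with limits of such
(the secant cone of `Y` at `z`, upstairs). -/
def secPairs {r : ℕ} (Y : Set (Pr r)) (z : Pr r) : Set (Pr r × Pr r) :=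
  {p | p.1 ∈ Y ∧ p.2 ∈ Y ∧ p.1 ≠ p.2 ∧ z ∈ lineThrough p.1 p.2}

/-- The fibre of `f : I_Y → ℙ^r` over `z` (with its limit points). -/
def secFiber {r : ℕ} (Y : Set (Pr r)) (z : Pr r) : Set (Pr r × Pr r) :=
  closureP (secPairs Y z)

/-- The linear map `ℂ^b → ℂ^a` given by a matrix of coefficients. -/
def matLin {a b : ℕ} (w : Fin a × Fin b → ℂ) : (Fin b → ℂ) →ₗ[ℂ] (Fin a → ℂ) :=
  Matrix.mulVecLin (Matrix.of fun i j => w (i, j))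

/-- The image of a subset of `ℙ^{b-1}` under the linear projection `ℙ^{b-1} ⇢ ℙ^{a-1}`
given by a matrix. -/
def projImage {a b : ℕ} (w : Fin a × Fin b → ℂ) (Z : Set (PrV b)) : Set (PrV a) :=
  {z | ∃ x ∈ Z, ∃ c : ℂ, c ≠ 0 ∧ z.rep = c • matLin w x.rep}

/-- `X ⊆ ℙ^N` is the image of `X̃ ⊆ ℙ^{N+1}` under a bijective projection from a point
`Q ∉ X̃` (the centre `Q` being the projectivized kernel of the surjective linear map `L`). -/
def IsBijectiveProjectionOf {N : ℕ} (X : Set (Pr N)) (Xt : Set (Pr (N+1))) : Prop :=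
  ∃ L : (Fin (N+2) → ℂ) →ₗ[ℂ] (Fin (N+1) → ℂ), Function.Surjective L ∧
    (∀ x ∈ Xt, L x.rep ≠ 0) ∧
    X = {z | ∃ x ∈ Xt, ∃ c : ℂ, c ≠ 0 ∧ z.rep = c • L x.rep} ∧
    (∀ x ∈ Xt, ∀ y ∈ Xt, (∃ c : ℂ, L x.rep = c • L y.rep) → x = y)

/-- `X ⊆ ℙ^N` is linearly normal if it is not the image, under a bijective projection from
a point, of a nondegenerate subvariety of `ℙ^{N+1}`. -/
def LinearlyNormal {N : ℕ} (X : Set (Pr N)) : Prop :=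
  ¬ ∃ Xt : Set (Pr (N+1)), IsClosed Xt ∧ IsIrreducible Xt ∧ NondegenerateSet Xt ∧
      IsBijectiveProjectionOf X Xt

/-- Extension by zero `ℂ^a → ℂ^b` (for `a ≤ b`). -/
def padMap (a b : ℕ) : (Fin a → ℂ) →ₗ[ℂ] (Fin b → ℂ) where
  toFun v := fun j => if h : (j : ℕ) < a then v ⟨j, h⟩ else 0
  map_add' v w := by funext j; by_cases h : (j : ℕ) < a <;> simp [h]
  map_smul' c v := by funext j; by_cases h : (j : ℕ) < a <;> simp [h]

lemma padMap_ne_zero {a b : ℕ} (hab : a ≤ b) {v : Fin a → ℂ} (hv : v ≠ 0) :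
    padMap a b v ≠ 0 := by
  obtain ⟨i, hi⟩ := Function.ne_iff.mp hv
  intro h
  have h2 := congrFun h ⟨i, lt_of_lt_of_le i.isLt hab⟩
  simp only [padMap, LinearMap.coe_mk, AddHom.coe_mk, Pi.zero_apply] at h2
  rw [dif_pos i.isLt] at h2
  exact hi (by simpa using h2)

/-- A point of `ℙ^{a-1}` viewed in `ℙ^{b-1}` via the inclusion of the first `a`
coordinates. -/
def embPt {a b : ℕ} (hab : a ≤ b) (x : PrV a) : PrV b :=
  Projectivization.mk ℂ (padMap a b x.rep) (padMap_ne_zero hab x.rep_nonzero)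

/-- The join of two subsets of projective space: the union of all lines joining a point of
`A` to a point of `B`. -/
def joinSets {n : ℕ} (A B : Set (PrV n)) : Set (PrV n) :=
  ⋃ x ∈ A, ⋃ y ∈ B, lineThrough x y


/-- The cone in `ℙ^{N+1} = ℙ^{r'+b+1}` over `Z ⊆ ℙ^{r'}` (embedded via the first `r'+1`
coordinates) with vertex the linear `ℙ^b` spanned by the last `b+1` coordinates: the
union of all lines joining a point of `Z` to a point of the vertex. -/
def coneOver (rp b : ℕ) (Z : Set (Pr rp)) : Set (Pr (rp + b + 1)) :=
  joinSets
    (embPt (show rp + 1 ≤ rp + b + 2 by omega) '' Z)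
    (projSub (LinearMap.ker
      (LinearMap.funLeft ℂ ℂ (Fin.castLE (show rp + 1 ≤ rp + b + 2 by omega)))))

/-!
Let `Q` be the centre of the generic projection. As `Z` is projectable, some form `f` vanishes on
`Sec(Z)` but not at the image of `Q` in the ambient space of `Z`. A form vanishing on all secants
through a smooth point vanishes on the tangent space there, because tangent lines are limits of
secants; hence `Q` is not tangent to the cone `Z'` at any point off its vertex, the projection is a
local isomorphism there, and `X` is smooth at the images of these points. At a vertex point the
tangent space of `Z'` is the whole space, as `Z` is nondegenerate, so that of `X` is the whole space
as well, which is too large for a smooth point. Thus `Sing(X)` is the isomorphic image of the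
vertex, a linear `ℙ^b`, and `X` fails to be linearly normal because it is by construction a
bijective projection of the nondegenerate variety `Z'`.
-/

attribute [local instance] MvPolynomial.gradedAlgebra

section LineRestriction

variable {σ R S : Type*} [CommRing R] [CommRing S] [Algebra R S] {f : MvPolynomial σ R} {d : ℕ}

lemma aeval_mul_of_isHomogeneous (hf : f.IsHomogeneous d) (s : S) (g : σ → S) :
    aeval (fun i => s * g i) f = s ^ d * aeval g f := by
  rw [aeval_def, aeval_def, eval₂_eq, eval₂_eq, Finset.mul_sum]
  refine Finset.sum_congr rfl fun m hm => ?_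
  have hdeg : ∑ i ∈ m.support, m i = d := (hf.degree_eq_sum_deg_support hm).symm
  simp only [mul_pow, Finset.prod_mul_distrib, Finset.prod_pow_eq_pow_sum, hdeg]
  ring

/-- The restriction of the polynomial `f` to the parametrized line `t ↦ a + t v`, a polynomial
in `t`. The point `a` and the direction `v` may have coordinates in any algebra over the ring of
coefficients of `f`. -/
def lineRestriction (a v : σ → S) : MvPolynomial σ R →ₐ[R] Polynomial S :=
  aeval fun i => Polynomial.C (a i) + Polynomial.C (v i) * Polynomial.X

lemma lineRestriction_X (a v : σ → S) (i : σ) :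
    lineRestriction a v (X i : MvPolynomial σ R) =
      Polynomial.C (a i) + Polynomial.C (v i) * Polynomial.X :=
  aeval_X _ _

lemma eval_lineRestriction (a v : σ → S) (f : MvPolynomial σ R) (t : S) :
    (lineRestriction a v f).eval t = aeval (a + t • v) f := by
  have h : ((Polynomial.aeval t).restrictScalars R).comp (lineRestriction a v) =
      (aeval (a + t • v) : MvPolynomial σ R →ₐ[R] S) := by
    refine algHom_ext fun i => ?_
    simp [lineRestriction, mul_comm (v i)]
  exact DFunLike.congr_fun h f

lemma eval₂_lineRestriction {T : Type*} [CommRing T] [Algebra R T] (φ : S →ₐ[R] T) (a v : σ → S)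
    (f : MvPolynomial σ R) (t : T) : (lineRestriction a v f).eval₂ (φ : S →+* T) t =
      aeval (fun i => φ (a i) + t * φ (v i)) f := by
  have hmap : (Polynomial.mapAlgHom φ).comp (lineRestriction a v) =
      (lineRestriction (φ ∘ a) (φ ∘ v) : MvPolynomial σ R →ₐ[R] Polynomial T) :=
    algHom_ext fun i => by simp [lineRestriction_X]
  rw [Polynomial.eval₂_eq_eval_map, ← Polynomial.coe_mapAlgHom, ← AlgHom.comp_apply, hmap,
    eval_lineRestriction]
  rfl

lemma lineRestriction_eq_zero_iff [IsDomain S] [Infinite S] {a v : σ → S} :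
    lineRestriction a v f = 0 ↔ ∀ t : S, t ≠ 0 → aeval (a + t • v) f = 0 := by
  refine ⟨fun h t _ => by rw [← eval_lineRestriction, h, Polynomial.eval_zero], fun h => ?_⟩
  refine Polynomial.eq_zero_of_infinite_isRoot _
    ((Set.finite_singleton 0).infinite_compl.mono fun t ht => ?_)
  rw [Set.mem_ofPred_eq, Polynomial.IsRoot, eval_lineRestriction]
  exact h t ht

lemma lineRestriction_monomial (a v : σ → S) (m : σ →₀ ℕ) (r : R) :
    lineRestriction a v (monomial m r) = Polynomial.C (algebraMap R S r) *
      (m.toMultiset.map fun i => Polynomial.C (a i) + Polynomial.C (v i) * Polynomial.X).prod := by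
  rw [lineRestriction, aeval_monomial, Finsupp.toMultiset_map, Finsupp.prod_toMultiset,
    Finsupp.prod_mapDomain_index (by simp) (by simp [pow_add])]
  rfl

lemma card_toMultiset_of_isHomogeneous (hf : f.IsHomogeneous d) {m : σ →₀ ℕ}
    (hm : m ∈ f.support) : m.toMultiset.card = d := by
  rw [Finsupp.card_toMultiset, hf.degree_eq_sum_deg_support hm]
  rfl

lemma natDegree_C_add_C_mul_X_le (a b : S) :
    (Polynomial.C a + Polynomial.C b * Polynomial.X).natDegree ≤ 1 := by
  rw [add_comm]
  exact Polynomial.natDegree_linear_le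

lemma natDegree_lineRestriction_le (hf : f.IsHomogeneous d) (a v : σ → S) :
    (lineRestriction a v f).natDegree ≤ d := by
  rw [f.as_sum, map_sum]
  refine Polynomial.natDegree_sum_le_of_forall_le _ _ fun m hm => ?_
  rw [lineRestriction_monomial]
  refine (Polynomial.natDegree_C_mul_le _ _).trans
    ((Polynomial.natDegree_multiset_prod_le _).trans ?_)
  refine (Multiset.sum_le_card_nsmul _ 1 ?_).trans_eq ?_
  · simp only [Multiset.mem_map]
    rintro _ ⟨_, ⟨i, -, rfl⟩, rfl⟩
    exact natDegree_C_add_C_mul_X_le _ _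
  · rw [Multiset.card_map, Multiset.card_map, smul_eq_mul, mul_one,
      card_toMultiset_of_isHomogeneous hf hm]

lemma coeff_lineRestriction_of_isHomogeneous (hf : f.IsHomogeneous d) (a v : σ → S) :
    (lineRestriction a v f).coeff d = aeval v f := by
  rw [f.as_sum, map_sum, map_sum, Polynomial.finsetSum_coeff]
  refine Finset.sum_congr rfl fun m hm => ?_
  have hcard : (m.toMultiset.map fun i =>
      Polynomial.C (a i) + Polynomial.C (v i) * Polynomial.X).card * 1 = d := by
    rw [mul_one, Multiset.card_map, card_toMultiset_of_isHomogeneous hf hm]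
  rw [lineRestriction_monomial, Polynomial.coeff_C_mul, ← hcard,
    Polynomial.coeff_multiset_prod_of_natDegree_le, aeval_monomial, Multiset.map_map]
  · congr 1
    simp only [Function.comp_def, Polynomial.coeff_add, Polynomial.coeff_C_succ,
      Polynomial.coeff_C_mul, Polynomial.coeff_X_one, mul_one, zero_add]
    rw [Finsupp.toMultiset_map, Finsupp.prod_toMultiset,
      Finsupp.prod_mapDomain_index (by simp) (by simp [pow_add])]
  · simp only [Multiset.mem_map]
    rintro _ ⟨i, -, rfl⟩
    exact natDegree_C_add_C_mul_X_le _ _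

lemma lineRestriction_zero_of_isHomogeneous (hf : f.IsHomogeneous d) (v : σ → S) :
    lineRestriction 0 v f = Polynomial.C (aeval v f) * Polynomial.X ^ d := by
  have hv : aeval (fun i => Polynomial.C (v i)) f = Polynomial.C (aeval v f) :=
    aeval_algebraMap_apply (Polynomial S) v f
  rw [← hv, mul_comm, ← aeval_mul_of_isHomogeneous hf, lineRestriction]
  simp only [Pi.zero_apply, map_zero, zero_add, mul_comm]

lemma coeff_lineRestriction_zero (v : σ → S) (f : MvPolynomial σ R) (i : ℕ) :
    (lineRestriction 0 v f).coeff i = aeval v (homogeneousComponent i f) := by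
  conv_lhs => rw [← sum_homogeneousComponent f]
  simp only [map_sum, Polynomial.finsetSum_coeff, Polynomial.coeff_C_mul_X_pow,
    lineRestriction_zero_of_isHomogeneous (homogeneousComponent_isHomogeneous _ f)]
  rw [Finset.sum_ite_eq, ite_eq_left_iff, Finset.mem_range, not_lt]
  intro h
  rw [homogeneousComponent_eq_zero i f h, map_zero]

end LineRestriction

section ZariskiTopology

variable {n : ℕ} {Y Y' : Set (PrV n)} {v : Fin n → ℂ} {f : MvPolynomial (Fin n) ℂ}

/-- The punctured affine cone over `Y`: all nonzero lifts of points of `Y`. -/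
def affCone (Y : Set (PrV n)) : Set (Fin n → ℂ) :=
  {v | ∃ hv : v ≠ 0, Projectivization.mk ℂ v hv ∈ Y}

lemma mem_affCone_iff_mk_mem (hv : v ≠ 0) : v ∈ affCone Y ↔ Projectivization.mk ℂ v hv ∈ Y :=
  ⟨fun h => h.2, fun h => ⟨hv, h⟩⟩

lemma smul_mem_affCone (h : v ∈ affCone Y) {c : ℂ} (hc : c ≠ 0) : c • v ∈ affCone Y := by
  obtain ⟨hv, h⟩ := h
  refine ⟨smul_ne_zero hc hv, ?_⟩
  rwa [(Projectivization.mk_eq_mk_iff' ℂ _ _ (smul_ne_zero hc hv) hv).mpr ⟨c, rfl⟩]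

lemma rep_mem_affCone {x : PrV n} : x.rep ∈ affCone Y ↔ x ∈ Y := by
  rw [mem_affCone_iff_mk_mem x.rep_nonzero, Projectivization.mk_rep]

lemma affCone_mono (h : Y ⊆ Y') : affCone Y ⊆ affCone Y' := fun _ hv => ⟨hv.1, h hv.2⟩

lemma affCone_injective : Function.Injective (affCone (n := n)) := fun Y Y' h => by
  ext x
  rw [← rep_mem_affCone, h, rep_mem_affCone]

lemma mk_rep_eq_smul (hv : v ≠ 0) :
    ∃ c : ℂ, c ≠ 0 ∧ (Projectivization.mk ℂ v hv).rep = c • v := by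
  obtain ⟨a, ha⟩ := Projectivization.exists_smul_eq_mk_rep ℂ v hv
  exact ⟨a, a.ne_zero, ha.symm⟩

lemma mem_idealOf : f ∈ idealOf Y ↔ ∀ v ∈ affCone Y, eval v f = 0 :=
  ⟨fun h v hv => h hv.2 v hv.1 rfl, fun h _ hx v hv hvx => h v ⟨hv, hvx ▸ hx⟩⟩

lemma idealOf_anti (h : Y ⊆ Y') : idealOf Y' ≤ idealOf Y := fun _ hf => h.trans hf

lemma mk_mem_pZero_iff (hv : v ≠ 0) :
    Projectivization.mk ℂ v hv ∈ pZero f ↔ lineRestriction 0 v f = 0 := by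
  simp only [lineRestriction_eq_zero_iff, zero_add, aeval_eq_eval]
  constructor
  · intro h c hc
    exact h _ (smul_ne_zero hc hv) ((Projectivization.mk_eq_mk_iff' ℂ _ _ _ _).mpr ⟨c, rfl⟩)
  · intro h w hw hwv
    obtain ⟨c, rfl⟩ := (Projectivization.mk_eq_mk_iff' ℂ _ _ _ _).mp hwv
    exact h c (left_ne_zero_of_smul hw)

lemma isHomogeneous_idealOf (Y : Set (PrV n)) :
    (idealOf Y).IsHomogeneous (homogeneousSubmodule (Fin n) ℂ) := by
  intro i f hf
  rw [← DirectSum.Decomposition.decompose'_eq, decomposition.decompose'_apply, mem_idealOf]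
  intro v hv
  have : lineRestriction 0 v f = 0 := lineRestriction_eq_zero_iff.mpr fun c hc => by
    rw [zero_add]
    exact mem_idealOf.mp hf _ (smul_mem_affCone hv hc)
  rw [← aeval_eq_eval, ← coeff_lineRestriction_zero, this, Polynomial.coeff_zero]

lemma pZero_mul (f g : MvPolynomial (Fin n) ℂ) : pZero (f * g) = pZero f ∪ pZero g := by
  ext x
  induction x using Projectivization.ind with | h v hv =>
  simp only [Set.mem_union, mk_mem_pZero_iff, map_mul, mul_eq_zero]

lemma isTopologicalBasis_compl_pZero (n : ℕ) : TopologicalSpace.IsTopologicalBasis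
    {U : Set (PrV n) | ∃ f : MvPolynomial (Fin n) ℂ, U = (pZero f)ᶜ} := by
  refine ⟨?_, Set.sUnion_eq_univ_iff.mpr fun x => ⟨_, ⟨1, rfl⟩, fun h => ?_⟩, rfl⟩
  · rintro _ ⟨f, rfl⟩ _ ⟨g, rfl⟩ x hx
    rw [← Set.compl_union, ← pZero_mul] at hx ⊢
    exact ⟨_, ⟨f * g, rfl⟩, hx, subset_rfl⟩
  · simpa using h x.rep x.rep_nonzero x.mk_rep

lemma isClosed_pZero (f : MvPolynomial (Fin n) ℂ) : IsClosed (pZero f) :=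
  isOpen_compl_iff.mp ((isTopologicalBasis_compl_pZero n).isOpen ⟨f, rfl⟩)

/-- The closed subset of projective space cut out by an ideal. -/
def projZeroLocus (I : Ideal (MvPolynomial (Fin n) ℂ)) : Set (PrV n) := ⋂ f ∈ I, pZero f

lemma isClosed_projZeroLocus (I : Ideal (MvPolynomial (Fin n) ℂ)) : IsClosed (projZeroLocus I) :=
  isClosed_biInter fun f _ => isClosed_pZero f

lemma subset_projZeroLocus_idealOf (Y : Set (PrV n)) : Y ⊆ projZeroLocus (idealOf Y) :=
  fun _ hx => Set.mem_iInter₂.mpr fun _ hf => hf hx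

lemma isClosed_iff_projZeroLocus_idealOf : IsClosed Y ↔ projZeroLocus (idealOf Y) = Y := by
  refine ⟨fun h => (subset_projZeroLocus_idealOf Y).antisymm' fun x hx => ?_,
    fun h => h ▸ isClosed_projZeroLocus _⟩
  by_contra hxY
  obtain ⟨_, ⟨f, rfl⟩, hxf, hf⟩ := (isTopologicalBasis_compl_pZero n).exists_subset_of_mem_open
    (show x ∈ Yᶜ from hxY) h.isOpen_compl
  exact hxf (Set.mem_iInter₂.mp hx f (Set.compl_subset_compl.mp hf))

lemma mem_affCone_projZeroLocus {I : Ideal (MvPolynomial (Fin n) ℂ)}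
    (hI : I.IsHomogeneous (homogeneousSubmodule (Fin n) ℂ)) :
    v ∈ affCone (projZeroLocus I) ↔ v ≠ 0 ∧ ∀ f ∈ I, eval v f = 0 := by
  constructor
  · rintro ⟨hv, h⟩
    exact ⟨hv, fun f hf => Set.mem_iInter₂.mp h f hf v hv rfl⟩
  · rintro ⟨hv, h⟩
    refine ⟨hv, Set.mem_iInter₂.mpr fun f hf => (mk_mem_pZero_iff hv).mpr ?_⟩
    ext i
    rw [coeff_lineRestriction_zero, aeval_eq_eval, h _ (homogeneousComponent_mem_of_mem hI hf i),
      Polynomial.coeff_zero]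

lemma mem_affCone_iff_of_isClosed (hY : IsClosed Y) :
    v ∈ affCone Y ↔ v ≠ 0 ∧ ∀ f ∈ idealOf Y, eval v f = 0 := by
  rw [← mem_affCone_projZeroLocus (isHomogeneous_idealOf Y),
    isClosed_iff_projZeroLocus_idealOf.mp hY]

lemma isClosed_of_forall_mem_affCone
    (h : ∀ v : Fin n → ℂ, v ≠ 0 → (∀ f ∈ idealOf Y, eval v f = 0) → v ∈ affCone Y) :
    IsClosed Y := by
  rw [isClosed_iff_projZeroLocus_idealOf]
  refine affCone_injective (Set.ext fun v => ?_)
  rw [mem_affCone_projZeroLocus (isHomogeneous_idealOf Y)]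
  exact ⟨fun hv => h v hv.1 hv.2, fun hv => ⟨hv.1, fun f hf => mem_idealOf.mp hf v hv⟩⟩

lemma inter_compl_pZero_nonempty_iff : (Y ∩ (pZero f)ᶜ).Nonempty ↔ f ∉ idealOf Y :=
  Set.inter_compl_nonempty_iff

lemma isPrime_idealOf (hY : IsIrreducible Y) : (idealOf Y).IsPrime := by
  constructor
  · intro h
    obtain ⟨x, hx⟩ := hY.nonempty
    have h1 : (1 : MvPolynomial (Fin n) ℂ) ∈ idealOf Y := h ▸ Submodule.mem_top
    simpa using mem_idealOf.mp h1 _ (rep_mem_affCone.mpr hx)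
  · intro f g hfg
    by_contra! ⟨hf, hg⟩
    refine inter_compl_pZero_nonempty_iff.mp ?_ hfg
    rw [pZero_mul, Set.compl_union]
    exact hY.isPreirreducible _ _ (isClosed_pZero f).isOpen_compl (isClosed_pZero g).isOpen_compl
      (inter_compl_pZero_nonempty_iff.mpr hf) (inter_compl_pZero_nonempty_iff.mpr hg)

lemma isIrreducible_of_isPrime_idealOf (hne : Y.Nonempty) (h : (idealOf Y).IsPrime) :
    IsIrreducible Y := by
  refine ⟨hne, ?_⟩
  rintro U V hU hV ⟨x, hxY, hxU⟩ ⟨y, hyY, hyV⟩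
  obtain ⟨_, ⟨f, rfl⟩, hxf, hf⟩ :=
    (isTopologicalBasis_compl_pZero n).exists_subset_of_mem_open hxU hU
  obtain ⟨_, ⟨g, rfl⟩, hyg, hg⟩ :=
    (isTopologicalBasis_compl_pZero n).exists_subset_of_mem_open hyV hV
  have hfg : f * g ∉ idealOf Y := fun hc =>
    (h.mem_or_mem hc).elim (fun h => hxf (h hxY)) fun h => hyg (h hyY)
  refine (inter_compl_pZero_nonempty_iff.mpr hfg).mono (Set.inter_subset_inter_right _ ?_)
  rw [pZero_mul, Set.compl_union]
  exact Set.inter_subset_inter hf hg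

end ZariskiTopology

section Dimension

lemma ringKrullDim_eq_of_isIntegral (R S : Type*) [CommRing R] [CommRing S] [Algebra R S]
    [Algebra.IsIntegral R S] [FaithfulSMul R S] : ringKrullDim S = ringKrullDim R := by
  apply le_antisymm
  · exact Order.krullDim_le_of_strictMono (PrimeSpectrum.comap (algebraMap R S)) fun p q hpq =>
      Ideal.IsIntegral.comap_lt_comap (R := R) (I := p.asIdeal) (J := q.asIdeal) hpq
  · refine iSup_le fun l => ?_
    obtain ⟨P, -, hP, hPl⟩ := Ideal.exists_ideal_over_prime_of_isIntegral l.head.asIdeal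
      (⊥ : Ideal S) (by simp [← RingHom.ker_eq_comap_bot])
    have : P.LiesOver l.head.asIdeal := ⟨hPl.symm⟩
    obtain ⟨l', hl', -, -⟩ := Ideal.exists_ltSeries_of_hasGoingUp l P
    exact hl' ▸ Order.LTSeries.length_le_krullDim l'

lemma ringKrullDim_eq_quotient_ker {R S : Type*} [CommRing R] [CommRing S] {f : R →+* S}
    (hf : f.IsIntegral) : ringKrullDim S = ringKrullDim (R ⧸ RingHom.ker f) := by
  have hint : (RingHom.kerLift f).IsIntegral :=
    RingHom.IsIntegral.tower_top (Ideal.Quotient.mk (RingHom.ker f)) _ hf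
  algebraize [RingHom.kerLift f]
  have := (faithfulSMul_iff_algebraMap_injective (R ⧸ RingHom.ker f) S).mpr
    (RingHom.kerLift_injective f)
  exact ringKrullDim_eq_of_isIntegral _ _

lemma height_eq_add_one_of_isMaximal_polynomial {R : Type*} [CommRing R] [IsNoetherianRing R]
    [IsJacobsonRing R] {k : ℕ∞} (h : ∀ p : Ideal R, p.IsMaximal → p.height = k)
    (P : Ideal (Polynomial R)) [P.IsMaximal] : P.height = k + 1 := by
  have hmax := Polynomial.isMaximal_comap_C_of_isJacobsonRing P
  have : P.LiesOver (P.comap (Polynomial.C : R →+* Polynomial R)) := ⟨rfl⟩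
  rw [Polynomial.height_eq_height_add_one (P.comap (Polynomial.C : R →+* Polynomial R)) P,
    h _ hmax]

variable {k : Type*} [Field k]

lemma height_eq_of_isMaximal_mvPolynomial {s : ℕ} (M : Ideal (MvPolynomial (Fin s) k))
    [M.IsMaximal] : M.height = s := by
  induction s with
  | zero =>
    have h := Ideal.height_le_ringKrullDim_of_ne_top (I := M) Ideal.IsPrime.ne_top'
    rw [MvPolynomial.ringKrullDim_of_isNoetherianRing] at h
    simpa using h
  | succ s ih =>
    let e := (finSuccEquiv k s).toRingEquiv
    have : (M.map e).IsMaximal := Ideal.map_isMaximal_of_equiv e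
    rw [← RingEquiv.height_map e M,
      height_eq_add_one_of_isMaximal_polynomial (fun p _ => ih p) (M.map e), Nat.cast_succ]

variable {B : Type*} [CommRing B] [IsDomain B]

lemma height_eq_of_isMaximal_of_isIntegral {s : ℕ} [Algebra (MvPolynomial (Fin s) k) B]
    [Algebra.IsIntegral (MvPolynomial (Fin s) k) B] [FaithfulSMul (MvPolynomial (Fin s) k) B]
    [IsNoetherianRing B] (M : Ideal B) [M.IsMaximal] : M.height = s := by
  apply le_antisymm
  · have h := Ideal.height_le_ringKrullDim_of_ne_top (I := M) Ideal.IsPrime.ne_top'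
    rw [ringKrullDim_eq_of_isIntegral (MvPolynomial (Fin s) k) B,
      MvPolynomial.ringKrullDim_of_isNoetherianRing, ringKrullDim_eq_zero_of_field, Nat.card_fin,
      zero_add] at h
    exact_mod_cast h
  · have := Ideal.isMaximal_comap_of_isIntegral_of_isMaximal (R := MvPolynomial (Fin s) k) M
    rw [Ideal.height_eq_height_add_of_liesOver_of_hasGoingDown
      (M.under (MvPolynomial (Fin s) k)) M, height_eq_of_isMaximal_mvPolynomial]
    exact le_self_add

lemma exists_ringKrullDim_eq_and_height_eq_of_finiteType (B : Type*) [CommRing B] [IsDomain B]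
    [Algebra k B] [Algebra.FiniteType k B] :
    ∃ s : ℕ, ringKrullDim B = s ∧ ∀ M : Ideal B, M.IsMaximal → M.height = s := by
  obtain ⟨s, g, hg, hint⟩ := exists_integral_inj_algHom_of_fg k B
  have : IsNoetherianRing B := Algebra.FiniteType.isNoetherianRing k B
  algebraize [g.toRingHom]
  have := (faithfulSMul_iff_algebraMap_injective (MvPolynomial (Fin s) k) B).mpr hg
  have : Algebra.IsIntegral (MvPolynomial (Fin s) k) B := ⟨hint⟩
  refine ⟨s, ?_, fun M _ => height_eq_of_isMaximal_of_isIntegral (k := k) M⟩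
  rw [ringKrullDim_eq_of_isIntegral (MvPolynomial (Fin s) k) B,
    MvPolynomial.ringKrullDim_of_isNoetherianRing]
  simp

end Dimension

section HomogeneousIdeals

variable {σ k : Type*} [Field k] {I P : Ideal (MvPolynomial σ k)} {f : MvPolynomial σ k}

lemma mem_vanishingIdeal_zero :
    f ∈ vanishingIdeal k {(0 : σ → k)} ↔ homogeneousComponent 0 f = 0 := by
  rw [mem_vanishingIdeal_singleton_iff, homogeneousComponent_zero, C_eq_zero, aeval_zero,
    constantCoeff_eq, Algebra.algebraMap_self_apply]

lemma vanishingIdeal_zero_eq_idealOfVars :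
    vanishingIdeal k {(0 : σ → k)} = idealOfVars σ k := by
  ext f
  rw [mem_vanishingIdeal_zero, homogeneousComponent_zero, C_eq_zero, ← pow_one (idealOfVars σ k),
    mem_pow_idealOfVars_iff']
  refine ⟨fun h s hs => ?_, fun h => h 0 (by simp)⟩
  rwa [(Finsupp.degree_eq_zero_iff s).mp (Nat.lt_one_iff.mp hs)]

lemma isHomogeneous_vanishingIdeal_zero :
    (vanishingIdeal k {(0 : σ → k)}).IsHomogeneous (homogeneousSubmodule σ k) := by
  rw [vanishingIdeal_zero_eq_idealOfVars]
  refine Ideal.homogeneous_span _ _ ?_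
  rintro _ ⟨i, rfl⟩
  exact ⟨1, isHomogeneous_X k i⟩

lemma le_vanishingIdeal_zero_of_isHomogeneous (hI : I.IsHomogeneous (homogeneousSubmodule σ k))
    (h : I ≠ ⊤) : I ≤ vanishingIdeal k {(0 : σ → k)} := by
  intro f hf
  rw [mem_vanishingIdeal_zero]
  by_contra hf0
  have h0 := homogeneousComponent_mem_of_mem hI hf 0
  rw [homogeneousComponent_zero] at h0 hf0
  exact h (I.eq_top_of_isUnit_mem h0 ((isUnit_iff_ne_zero.mpr fun h => hf0 (by rw [h, C_0])).map C))

lemma exists_X_notMem_of_lt_vanishingIdeal_zero (h : P < vanishingIdeal k {(0 : σ → k)}) :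
    ∃ i, (X i : MvPolynomial σ k) ∉ P := by
  by_contra! hX
  rw [vanishingIdeal_zero_eq_idealOfVars] at h
  exact h.not_ge (Ideal.span_le.mpr (Set.range_subset_iff.mpr hX))

lemma exists_isHomogeneousElem_notMem (hI : I.IsHomogeneous (homogeneousSubmodule σ k))
    (h : ¬ I ≤ P) : ∃ g ∈ I, g ∉ P ∧ SetLike.IsHomogeneousElem (homogeneousSubmodule σ k) g := by
  obtain ⟨f, hfI, hfP⟩ := SetLike.not_le_iff_exists.mp h
  by_contra! hg
  refine hfP (sum_homogeneousComponent f ▸ Ideal.sum_mem _ fun i _ => ?_)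
  by_contra hi
  exact hg _ (homogeneousComponent_mem_of_mem hI hfI i) hi ⟨i, homogeneousComponent_mem i f⟩

lemma ringKrullDim_quotient_le_of_mem_isMaximal {A : Type*} [CommRing A] [Algebra k A]
    [Algebra.FiniteType k A] (P : Ideal A) [P.IsPrime] {M : Ideal A} [M.IsMaximal] (hPM : P ≤ M)
    {g : A} (hg : g ∈ M) :
    ringKrullDim (A ⧸ P) ≤ ringKrullDim (A ⧸ (P ⊔ Ideal.span {g})) + 1 := by
  obtain ⟨s, hs, hheight⟩ :=
    exists_ringKrullDim_eq_and_height_eq_of_finiteType (k := k) (A ⧸ P)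
  have : IsNoetherianRing (A ⧸ P) := Algebra.FiniteType.isNoetherianRing k _
  have hM : (M.map (Ideal.Quotient.mk P)).IsMaximal :=
    Ideal.IsMaximal.map_of_surjective_of_ker_le Ideal.Quotient.mk_surjective
      (by rwa [Ideal.mk_ker])
  have h := Ideal.height_le_ringKrullDim_quotient_add_one
    (Ideal.mem_map_of_mem (Ideal.Quotient.mk P) hg)
  have e := ringKrullDim_eq_of_ringEquiv (DoubleQuot.quotQuotEquivQuotSup P (Ideal.span {g}))
  rw [Ideal.map_span, Set.image_singleton] at e
  rw [hheight _ hM, e] at h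
  exact hs.trans_le h

lemma exists_isPrime_natCast_le_ringKrullDim_quotient {A : Type*} [CommRing A] {I : Ideal A}
    {d : ℕ} (h : d ≤ ringKrullDim (A ⧸ I)) :
    ∃ Q : Ideal A, Q.IsPrime ∧ I ≤ Q ∧ d ≤ ringKrullDim (A ⧸ Q) := by
  rw [ringKrullDim_quotient, Order.le_krullDim_iff] at h
  obtain ⟨l, hl⟩ := h
  refine ⟨l.head.1.asIdeal, l.head.1.isPrime, l.head.2, ?_⟩
  rw [ringKrullDim_quotient, Order.le_krullDim_iff]
  exact ⟨⟨l.length, fun i => ⟨(l i).1, LTSeries.head_le l i⟩, fun i => l.step i⟩, hl⟩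

lemma ringKrullDim_quotient_anti {A : Type*} [CommRing A] {I J : Ideal A} (h : I ≤ J) :
    ringKrullDim (A ⧸ J) ≤ ringKrullDim (A ⧸ I) :=
  ringKrullDim_le_of_surjective (Ideal.Quotient.factor h) (Ideal.Quotient.factor_surjective h)

lemma exists_isHomogeneous_isPrime_between [Finite σ] [P.IsPrime]
    (hP : P.IsHomogeneous (homogeneousSubmodule σ k))
    (hlt : P < vanishingIdeal k {(0 : σ → k)}) {d : ℕ}
    (hd : (d + 2 : ℕ) ≤ ringKrullDim (MvPolynomial σ k ⧸ P)) :
    ∃ Q : Ideal (MvPolynomial σ k), Q.IsPrime ∧ Q.IsHomogeneous (homogeneousSubmodule σ k) ∧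
      P < Q ∧ Q < vanishingIdeal k {(0 : σ → k)} ∧
      (d + 1 : ℕ) ≤ ringKrullDim (MvPolynomial σ k ⧸ Q) := by
  obtain ⟨g, hgM, hgP, hg⟩ :=
    exists_isHomogeneousElem_notMem isHomogeneous_vanishingIdeal_zero hlt.not_ge
  have hdim := hd.trans (ringKrullDim_quotient_le_of_mem_isMaximal (k := k) P hlt.le hgM)
  rw [Nat.cast_succ, ENat.WithBot.add_le_add_one_right_iff] at hdim
  obtain ⟨Q, hQ, hle, hdQ⟩ := exists_isPrime_natCast_le_ringKrullDim_quotient hdim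
  let Q' := Q.homogeneousCore (homogeneousSubmodule σ k)
  have hdQ' : (d + 1 : ℕ) ≤ ringKrullDim (MvPolynomial σ k ⧸ Q'.toIdeal) :=
    hdQ.trans (ringKrullDim_quotient_anti (Ideal.toIdeal_homogeneousCore_le _ _))
  have hPQ : P ≤ Q'.toIdeal := by
    rw [← hP.toIdeal_homogeneousCore_eq_self]
    exact Ideal.homogeneousCore_mono _ (le_sup_left.trans hle)
  have hgQ : g ∈ Q'.toIdeal := Ideal.mem_homogeneousCore_of_homogeneous_of_mem hg
    (hle (Ideal.mem_sup_right (Ideal.mem_span_singleton_self g)))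
  have hQ' : Q'.toIdeal.IsPrime := hQ.homogeneousCore
  refine ⟨Q'.toIdeal, hQ', Q'.isHomogeneous, lt_of_le_of_ne hPQ fun h => hgP (h ▸ hgQ),
    lt_of_le_of_ne (le_vanishingIdeal_zero_of_isHomogeneous Q'.isHomogeneous hQ'.ne_top)
      fun h => ?_, hdQ'⟩
  rw [h, ringKrullDim_eq_zero_of_isField
    ((Ideal.Quotient.maximal_ideal_iff_isField_quotient _).mp inferInstance)] at hdQ'
  exact absurd (show d + 1 ≤ 0 by exact_mod_cast hdQ') (by omega)

end HomogeneousIdeals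

section ProjectiveDimension

lemma nonempty_irreducibleCloseds (T : Type*) [TopologicalSpace T] [Nonempty T] :
    Nonempty (TopologicalSpace.IrreducibleCloseds T) :=
  ⟨⟨closure {Classical.arbitrary T}, isIrreducible_singleton.closure, isClosed_closure⟩⟩

lemma topologicalKrullDim_add_one_le_of_ssubset {T : Type*} [TopologicalSpace T] {Y Y' : Set T}
    (hY' : IsClosed Y') (hY : IsIrreducible Y) (h : Y' ⊂ Y) :
    topologicalKrullDim Y' + 1 ≤ topologicalKrullDim Y := by
  obtain rfl | hne := Y'.eq_empty_or_nonempty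
  · have : IsEmpty (TopologicalSpace.IrreducibleCloseds (∅ : Set T)) :=
      ⟨fun D => D.isIrreducible.nonempty.some.2⟩
    simp [topologicalKrullDim, Order.krullDim_eq_bot]
  have := hne.to_subtype
  have := nonempty_irreducibleCloseds Y'
  have : IrreducibleSpace Y := Subtype.irreducibleSpace hY
  have hi := (Topology.IsEmbedding.inclusion h.subset).isInducing
  let φ : WithTop (TopologicalSpace.IrreducibleCloseds Y') → TopologicalSpace.IrreducibleCloseds Y
    | ⊤ => ⟨Set.univ, IrreducibleSpace.isIrreducible_univ Y, isClosed_univ⟩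
    | (D : TopologicalSpace.IrreducibleCloseds Y') => D.map _ hi.continuous
  have hφ : StrictMono φ := by
    refine WithTop.strictMono_iff.mpr
      ⟨TopologicalSpace.IrreducibleCloseds.map_strictMono_of_isInducing hi, fun D => ?_⟩
    refine lt_of_le_of_ne (fun _ _ => trivial) fun heq => h.not_subset fun x hx => ?_
    have hDY' : closure (Set.inclusion h.subset '' D) ⊆ Subtype.val ⁻¹' Y' :=
      closure_minimal (Set.image_subset_iff.mpr fun y _ => y.2)
        (hY'.preimage continuous_subtype_val)
    exact hDY' (show (⟨x, hx⟩ : Y) ∈ φ D from heq ▸ Set.mem_univ _)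
  rw [topologicalKrullDim, topologicalKrullDim, ← Order.krullDim_WithTop]
  exact Order.krullDim_le_of_strictMono φ hφ

variable {n : ℕ} {Y : Set (PrV n)}

lemma idealOf_ne_top (h : Y.Nonempty) : idealOf Y ≠ ⊤ := by
  obtain ⟨x, hx⟩ := h
  rw [Ideal.ne_top_iff_one, mem_idealOf]
  exact fun h => by simpa using h _ (rep_mem_affCone.mpr hx)

lemma idealOf_lt_vanishingIdeal_zero (h : Y.Nonempty) :
    idealOf Y < vanishingIdeal ℂ {(0 : Fin n → ℂ)} := by
  refine lt_of_le_of_ne (le_vanishingIdeal_zero_of_isHomogeneous (isHomogeneous_idealOf Y)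
    (idealOf_ne_top h)) fun heq => ?_
  obtain ⟨x, hx⟩ := h
  refine x.rep_nonzero (funext fun i => ?_)
  have hX : (X i : MvPolynomial (Fin n) ℂ) ∈ idealOf Y := by simp [heq]
  simpa using mem_idealOf.mp hX _ (rep_mem_affCone.mpr hx)

lemma idealOf_projZeroLocus {P : Ideal (MvPolynomial (Fin n) ℂ)} [hP : P.IsPrime]
    (hhom : P.IsHomogeneous (homogeneousSubmodule (Fin n) ℂ))
    (hlt : P < vanishingIdeal ℂ {(0 : Fin n → ℂ)}) :
    idealOf (projZeroLocus P) = P := by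
  apply le_antisymm
  · intro f hf
    obtain ⟨i, hi⟩ := exists_X_notMem_of_lt_vanishingIdeal_zero hlt
    refine (hP.mem_or_mem (x := f) (y := X i) ?_).resolve_right hi
    rw [← MvPolynomial.IsPrime.vanishingIdeal_zeroLocus (K := ℂ) P, mem_vanishingIdeal_iff]
    intro v hv
    rw [map_mul]
    obtain rfl | hv0 := eq_or_ne v 0
    · simp
    · exact mul_eq_zero_of_left
        (mem_idealOf.mp hf v ((mem_affCone_projZeroLocus hhom).mpr ⟨hv0, hv⟩)) _
  · exact fun f hf => mem_idealOf.mpr fun v hv => ((mem_affCone_projZeroLocus hhom).mp hv).2 f hf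

lemma isIrreducible_projZeroLocus {P : Ideal (MvPolynomial (Fin n) ℂ)} [hP : P.IsPrime]
    (hhom : P.IsHomogeneous (homogeneousSubmodule (Fin n) ℂ))
    (hlt : P < vanishingIdeal ℂ {(0 : Fin n → ℂ)}) :
    IsIrreducible (projZeroLocus P) := by
  have hI := idealOf_projZeroLocus hhom hlt
  refine isIrreducible_of_isPrime_idealOf (Set.nonempty_iff_ne_empty.mpr fun h => hP.ne_top ?_)
    (by rwa [hI])
  rw [← hI, h, Ideal.eq_top_iff_one]
  exact Set.empty_subset _

lemma idealOf_lt_idealOf (hY : IsClosed Y) {Y' : Set (PrV n)} (h : Y ⊂ Y') :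
    idealOf Y' < idealOf Y := by
  refine lt_of_le_not_ge (idealOf_anti h.subset) fun hle => h.not_subset ?_
  rw [← isClosed_iff_projZeroLocus_idealOf.mp hY]
  exact (subset_projZeroLocus_idealOf Y').trans (Set.biInter_subset_biInter_left hle)

lemma pdim_nonneg (hne : Y.Nonempty) : 0 ≤ pdim Y := by
  have := hne.to_subtype
  have := nonempty_irreducibleCloseds Y
  exact Order.krullDim_nonneg

lemma pdim_add_one_le_ringKrullDim (hY : IsClosed Y) (hne : Y.Nonempty) :
    pdim Y + 1 ≤ ringKrullDim (MvPolynomial (Fin n) ℂ ⧸ idealOf Y) := by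
  have := hne.to_subtype
  have := nonempty_irreducibleCloseds Y
  let ι : TopologicalSpace.IrreducibleCloseds Y → TopologicalSpace.IrreducibleCloseds (PrV n) :=
    TopologicalSpace.IrreducibleCloseds.map Subtype.val continuous_subtype_val
  have hι : StrictMono ι :=
    TopologicalSpace.IrreducibleCloseds.map_strictMono_of_isInducing .subtypeVal
  have hιY (D) : (ι D : Set (PrV n)) ⊆ Y :=
    closure_minimal (Subtype.coe_image_subset Y D) hY
  let φ : WithBot (TopologicalSpace.IrreducibleCloseds Y) →
      (PrimeSpectrum.zeroLocus (R := MvPolynomial (Fin n) ℂ) (idealOf Y))ᵒᵈ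
    | ⊥ => .toDual ⟨⟨vanishingIdeal ℂ {(0 : Fin n → ℂ)}, inferInstance⟩,
        (idealOf_lt_vanishingIdeal_zero hne).le⟩
    | (D : TopologicalSpace.IrreducibleCloseds Y) =>
      .toDual ⟨⟨idealOf (ι D), isPrime_idealOf (ι D).isIrreducible⟩, idealOf_anti (hιY D)⟩
  have hφ : StrictMono φ := WithBot.strictMono_iff.mpr
    ⟨fun D E h => idealOf_lt_idealOf (ι D).isClosed (hι h),
      fun D => idealOf_lt_vanishingIdeal_zero (ι D).isIrreducible.nonempty⟩
  have h := Order.krullDim_le_of_strictMono φ hφ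
  rwa [Order.krullDim_withBot, Order.krullDim_orderDual, ← ringKrullDim_quotient] at h

lemma le_pdim_of_add_one_le_ringKrullDim {d : ℕ} (hY : IsClosed Y) (hirr : IsIrreducible Y)
    (hd : (d + 1 : ℕ) ≤ ringKrullDim (MvPolynomial (Fin n) ℂ ⧸ idealOf Y)) : d ≤ pdim Y := by
  induction d generalizing Y with
  | zero => exact_mod_cast pdim_nonneg hirr.nonempty
  | succ d ih =>
    have := isPrime_idealOf hirr
    obtain ⟨Q, hQ, hhom, hlt, hQlt, hdQ⟩ := exists_isHomogeneous_isPrime_between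
      (isHomogeneous_idealOf Y) (idealOf_lt_vanishingIdeal_zero hirr.nonempty) hd
    have hI := idealOf_projZeroLocus hhom hQlt
    have hss : projZeroLocus Q ⊂ Y := by
      refine Set.ssubset_iff_subset_ne.mpr ⟨?_, fun h => hlt.ne (h ▸ hI)⟩
      rw [← isClosed_iff_projZeroLocus_idealOf.mp hY]
      exact Set.biInter_subset_biInter_left hlt.le
    calc ((d + 1 : ℕ) : WithBot ℕ∞) ≤ pdim (projZeroLocus Q) + 1 := by
          rw [Nat.cast_succ, ENat.WithBot.add_le_add_one_right_iff]
          exact ih (isClosed_projZeroLocus Q) (isIrreducible_projZeroLocus hhom hQlt)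
            (by rwa [hI])
      _ ≤ pdim Y := topologicalKrullDim_add_one_le_of_ssubset (isClosed_projZeroLocus Q) hirr hss

theorem pdim_add_one_eq_ringKrullDim (hY : IsClosed Y) (hirr : IsIrreducible Y) :
    pdim Y + 1 = ringKrullDim (MvPolynomial (Fin n) ℂ ⧸ idealOf Y) := by
  apply (pdim_add_one_le_ringKrullDim hY hirr.nonempty).antisymm
  have := isPrime_idealOf hirr
  obtain ⟨s, hs, -⟩ := exists_ringKrullDim_eq_and_height_eq_of_finiteType (k := ℂ)
    (MvPolynomial (Fin n) ℂ ⧸ idealOf Y)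
  obtain _ | d := s
  · rw [hs]
    exact zero_le_one.trans (le_add_of_nonneg_left (pdim_nonneg hirr.nonempty))
  · rw [hs, Nat.cast_succ, ENat.WithBot.add_le_add_one_right_iff]
    exact le_pdim_of_add_one_le_ringKrullDim hY hirr hs.ge

end ProjectiveDimension

section Differentials

variable {n m : ℕ} {Y : Set (PrV n)} {v : Fin n → ℂ} {c : ℂ} {f : MvPolynomial (Fin n) ℂ}

lemma jacLin_apply (f : MvPolynomial (Fin n) ℂ) (v ξ : Fin n → ℂ) :
    jacLin f v ξ = ∑ i, eval v (pderiv i f) * ξ i := by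
  simp [jacLin]

lemma jacLin_mul (f g : MvPolynomial (Fin n) ℂ) (v : Fin n → ℂ) :
    jacLin (f * g) v = eval v f • jacLin g v + eval v g • jacLin f v := by
  refine LinearMap.ext fun ξ => ?_
  rw [LinearMap.add_apply, LinearMap.smul_apply, LinearMap.smul_apply]
  simp only [jacLin_apply, smul_eq_mul, Finset.mul_sum, ← Finset.sum_add_distrib]
  refine Finset.sum_congr rfl fun i _ => ?_
  rw [Derivation.leibniz, map_add, smul_eq_mul, smul_eq_mul, map_mul, map_mul]
  ring

/-- The differential `jacLin` at the point `v`, as a linear map on polynomials. -/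
def differentialAt (v : Fin n → ℂ) : MvPolynomial (Fin n) ℂ →ₗ[ℂ] Module.Dual ℂ (Fin n → ℂ) where
  toFun f := jacLin f v
  map_add' f g := by ext; simp [jacLin_apply, add_mul, Finset.sum_add_distrib]
  map_smul' c f := by ext; simp [jacLin_apply, Finset.mul_sum, mul_assoc]

lemma differentialAt_apply (f : MvPolynomial (Fin n) ℂ) (v : Fin n → ℂ) :
    differentialAt v f = jacLin f v := rfl

lemma jacLin_add (f g : MvPolynomial (Fin n) ℂ) (v : Fin n → ℂ) :
    jacLin (f + g) v = jacLin f v + jacLin g v := map_add (differentialAt v) f g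

lemma jacLin_sub (f g : MvPolynomial (Fin n) ℂ) (v : Fin n → ℂ) :
    jacLin (f - g) v = jacLin f v - jacLin g v := map_sub (differentialAt v) f g

lemma jacLin_C (c : ℂ) (v : Fin n → ℂ) : jacLin (C c) v = 0 := by
  ext
  simp [jacLin_apply]

lemma jacLin_X (i : Fin n) (v : Fin n → ℂ) : jacLin (X i) v = LinearMap.proj i := by
  refine LinearMap.ext fun ξ => ?_
  simp [jacLin_apply, pderiv_X, Pi.single_apply]

lemma jacLin_bind₁ (g : Fin n → MvPolynomial (Fin m) ℂ) (f : MvPolynomial (Fin n) ℂ)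
    (v ξ : Fin m → ℂ) :
    jacLin (bind₁ g f) v ξ = jacLin f (fun i => eval v (g i)) fun i => jacLin (g i) v ξ := by
  induction f using MvPolynomial.induction_on with
  | C c => simp [jacLin_C]
  | add p q hp hq => rw [map_add, jacLin_add, jacLin_add, LinearMap.add_apply,
      LinearMap.add_apply, hp, hq]
  | mul_X p i hp =>
    have heval : eval v (bind₁ g p) = eval (fun i => eval v (g i)) p := eval₂Hom_bind₁ _ _ _ _
    rw [map_mul, bind₁_X_right, jacLin_mul, jacLin_mul, jacLin_X]
    simp only [LinearMap.add_apply, LinearMap.smul_apply, hp, eval_X, heval, LinearMap.proj_apply]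

lemma eval_derivative_lineRestriction_zero (v ξ : Fin n → ℂ) (f : MvPolynomial (Fin n) ℂ) :
    (Polynomial.derivative (lineRestriction v ξ f)).eval 0 = jacLin f v ξ := by
  have heval (p : MvPolynomial (Fin n) ℂ) : (lineRestriction v ξ p).eval 0 = eval v p := by
    rw [eval_lineRestriction, zero_smul, add_zero, aeval_eq_eval]
  induction f using MvPolynomial.induction_on with
  | C c => simp [lineRestriction, jacLin_C, Polynomial.algebraMap_eq]
  | add p q hp hq => simp [hp, hq, jacLin_add]
  | mul_X p i hp =>
    rw [map_mul, Polynomial.derivative_mul, Polynomial.eval_add, Polynomial.eval_mul,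
      Polynomial.eval_mul, hp, heval, heval, jacLin_mul, jacLin_X, lineRestriction_X]
    simp
    ring

lemma jacLin_eq_zero_of_forall_eval_add_smul {ξ : Fin n → ℂ}
    (h : ∀ t : ℂ, t ≠ 0 → eval (v + t • ξ) f = 0) : jacLin f v ξ = 0 := by
  rw [← eval_derivative_lineRestriction_zero, lineRestriction_eq_zero_iff.mpr h]
  simp

lemma mem_affTangent {ξ : Fin n → ℂ} :
    ξ ∈ affTangent Y v ↔ ∀ f ∈ idealOf Y, jacLin f v ξ = 0 := by
  simp only [affTangent, Submodule.mem_iInf, LinearMap.mem_ker]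
  rfl

lemma affTangent_le_affTangent_smul (Y : Set (PrV n)) (v : Fin n → ℂ) (hc : c ≠ 0) :
    affTangent Y v ≤ affTangent Y (c • v) := by
  intro ξ hξ
  rw [mem_affTangent] at hξ ⊢
  intro f hf
  have hmem : bind₁ (fun i => C c * X i) f ∈ idealOf Y := mem_idealOf.mpr fun w hw => by
    have : eval w (bind₁ (fun i => C c * X i) f) = eval (c • w) f := by
      rw [← aeval_eq_eval, aeval_bind₁]
      simp only [map_mul, aeval_X, aeval_C]
      rfl
    rw [this]
    exact mem_idealOf.mp hf _ (smul_mem_affCone hw hc)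
  have hξf := hξ _ hmem
  simp only [jacLin_bind₁, jacLin_mul, jacLin_C, jacLin_X, smul_zero, add_zero, eval_C, eval_X,
    map_mul, LinearMap.smul_apply, LinearMap.proj_apply] at hξf
  change jacLin f (c • v) (c • ξ) = 0 at hξf
  rw [map_smul, smul_eq_mul] at hξf
  exact (mul_eq_zero.mp hξf).resolve_left hc

lemma affTangent_smul (Y : Set (PrV n)) (v : Fin n → ℂ) (hc : c ≠ 0) :
    affTangent Y (c • v) = affTangent Y v := by
  refine le_antisymm ?_ (affTangent_le_affTangent_smul Y v hc)
  have := affTangent_le_affTangent_smul Y (c • v) (inv_ne_zero hc)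
  rwa [smul_smul, inv_mul_cancel₀ hc, one_smul] at this

/-- The affine-linear polynomial `x ↦ μ (x - z)`, which vanishes at `z` and has differential `μ`. -/
def affineForm (z : Fin n → ℂ) : Module.Dual ℂ (Fin n → ℂ) →ₗ[ℂ] MvPolynomial (Fin n) ℂ where
  toFun μ := ∑ i, μ (Pi.single i 1) • (X i - C (z i))
  map_add' μ ν := by simp only [LinearMap.add_apply, add_smul, Finset.sum_add_distrib]
  map_smul' c μ := by simp [Finset.smul_sum, mul_smul]

lemma affineForm_apply (z : Fin n → ℂ) (μ : Module.Dual ℂ (Fin n → ℂ)) :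
    affineForm z μ = ∑ i, μ (Pi.single i 1) • (X i - C (z i)) := rfl

lemma sum_apply_single_mul (μ : Module.Dual ℂ (Fin n → ℂ)) (v : Fin n → ℂ) :
    ∑ i, μ (Pi.single i 1) * v i = μ v := by
  conv_rhs => rw [pi_eq_sum_univ' v, map_sum]
  simp [mul_comm]

lemma eval_affineForm (z : Fin n → ℂ) (μ : Module.Dual ℂ (Fin n → ℂ)) (v : Fin n → ℂ) :
    eval v (affineForm z μ) = μ (v - z) := by
  rw [← sum_apply_single_mul, affineForm_apply]
  simp [smul_eval]

lemma jacLin_affineForm (z : Fin n → ℂ) (μ : Module.Dual ℂ (Fin n → ℂ)) (v : Fin n → ℂ) :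
    jacLin (affineForm z μ) v = μ := by
  refine LinearMap.ext fun ξ => ?_
  rw [affineForm_apply, ← differentialAt_apply, map_sum, ← sum_apply_single_mul μ ξ]
  simp [differentialAt_apply, jacLin_sub, jacLin_C, jacLin_X]

lemma affineForm_proj (z : Fin n → ℂ) (i : Fin n) :
    affineForm z (LinearMap.proj i) = X i - C (z i) := by
  simp [affineForm_apply, Pi.single_apply]

lemma affineForm_mem_vanishingIdeal (z : Fin n → ℂ) (μ : Module.Dual ℂ (Fin n → ℂ)) :
    affineForm z μ ∈ vanishingIdeal ℂ {z} := by
  rw [mem_vanishingIdeal_singleton_iff, aeval_eq_eval, eval_affineForm, sub_self, map_zero]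

lemma sub_C_sub_affineForm_mem_sq (z : Fin n → ℂ) (f : MvPolynomial (Fin n) ℂ) :
    f - C (eval z f) - affineForm z (jacLin f z) ∈ vanishingIdeal ℂ {z} ^ 2 := by
  induction f using MvPolynomial.induction_on with
  | C c => simp [jacLin_C]
  | add p q hp hq =>
    rw [jacLin_add, map_add, map_add, map_add]
    convert Ideal.add_mem _ hp hq using 1
    ring
  | mul_X p i hp =>
    rw [jacLin_mul, map_add, map_smul, map_smul, jacLin_X, affineForm_proj, smul_eq_C_mul,
      smul_eq_C_mul, map_mul, eval_X, C_mul]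
    have hsq : affineForm z (jacLin p z) * (X i - C (z i)) ∈ vanishingIdeal ℂ {z} ^ 2 := by
      rw [pow_two, ← affineForm_proj]
      exact Ideal.mul_mem_mul (affineForm_mem_vanishingIdeal _ _)
        (affineForm_mem_vanishingIdeal _ _)
    convert Ideal.add_mem _ (Ideal.mul_mem_right (X i) _ hp) hsq using 1
    ring

lemma vanishingIdeal_singleton_le {σ k : Type*} [Field k] {z : σ → k}
    {I : Ideal (MvPolynomial σ k)} (h : ∀ i, X i - C (z i) ∈ I) : vanishingIdeal k {z} ≤ I := by
  have hsub (f : MvPolynomial σ k) : f - C (aeval z f) ∈ I := by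
    induction f using MvPolynomial.induction_on with
    | C c => simp
    | add p q hp hq =>
      rw [map_add, C_add]
      convert I.add_mem hp hq using 1
      ring
    | mul_X p i hp =>
      rw [map_mul, aeval_X, C_mul]
      convert I.add_mem (I.mul_mem_right (X i) hp) (I.mul_mem_left (C (aeval z p)) (h i)) using 1
      ring
  intro f hf
  have := hsub f
  rwa [(mem_vanishingIdeal_singleton_iff z f).mp hf, C_0, sub_zero] at this

end Differentials

section TangentCone

lemma exists_sub_one_mem_and_mul_sub_mul_mem {R : Type*} [CommRing R] {m J : Ideal R} {t : R}
    (hm : m.FG) (h : m ≤ J ⊔ Ideal.span {t} ⊔ m * m) :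
    ∃ r, r - 1 ∈ m ∧ ∀ x ∈ m, ∃ u, r * x - u * t ∈ J := by
  obtain ⟨r, hr1, hr⟩ := Submodule.exists_sub_one_mem_and_smul_le_of_fg_of_le_sup hm le_rfl h
  refine ⟨r, hr1, fun x hx => ?_⟩
  obtain ⟨a, ha, y, hy, hay⟩ := Submodule.mem_sup.mp
    (hr (Submodule.smul_mem_pointwise_smul x r m hx))
  obtain ⟨u, rfl⟩ := Ideal.mem_span_singleton'.mp hy
  exact ⟨u, by rwa [← smul_eq_mul r, ← hay, add_sub_cancel_right]⟩

lemma height_map_mk_le_of_mem_minimalPrimes {R : Type*} [CommRing R] [IsNoetherianRing R]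
    {I p : Ideal R} {k : ℕ} {s : Fin k → R} (hp : p ∈ (I ⊔ Ideal.span (range s)).minimalPrimes) :
    (p.map (Ideal.Quotient.mk I)).height ≤ k := by
  have hmin : p.map (Ideal.Quotient.mk I) ∈
      (Ideal.span (Ideal.Quotient.mk I '' range s)).minimalPrimes := by
    rw [← Ideal.map_span, Ideal.minimalPrimes_map_of_surjective Ideal.Quotient.mk_surjective,
      Ideal.mk_ker, sup_comm]
    exact mem_image_of_mem _ hp
  refine (Ideal.height_le_card_of_mem_minimalPrimes_span ((finite_range s).image _) hmin).trans ?_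
  rw [← image_univ, ← image_comp]
  exact_mod_cast (ncard_image_le finite_univ).trans (by simp [ncard_univ])

lemma pow_mul_aeval_mem {R A : Type*} [CommRing R] [CommRing A] [Algebra R A] {σ : Type*}
    {f : MvPolynomial σ R} {d : ℕ} (hf : f.IsHomogeneous d) {J : Ideal A} {r t : A} {w u : σ → A}
    (h : ∀ i, r * w i - u i * t ∈ J) (hw : aeval w f ∈ J) : t ^ d * aeval u f ∈ J := by
  have hcongr (g : σ → A) : Ideal.Quotient.mk J (aeval g f) =
      aeval (fun i => Ideal.Quotient.mk J (g i)) f :=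
    comp_aeval_apply g (Ideal.Quotient.mkₐ R J) f
  have heq : Ideal.Quotient.mk J (aeval (fun i => r * w i) f) =
      Ideal.Quotient.mk J (aeval (fun i => t * u i) f) := by
    rw [hcongr, hcongr]
    congr 2
    funext i
    rw [Ideal.Quotient.eq, mul_comm t]
    exact h i
  rw [Ideal.Quotient.eq, aeval_mul_of_isHomogeneous hf, aeval_mul_of_isHomogeneous hf] at heq
  exact (J.sub_mem_iff_right (J.mul_mem_left _ hw)).mp heq

lemma exists_sup_span_range_eq {k M : Type*} [Field k] [AddCommGroup M] [Module k M]
    [FiniteDimensional k M] {D N : Submodule k M} (h : D ≤ N) {r : ℕ}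
    (hr : Module.finrank k N = Module.finrank k D + r) :
    ∃ w : Fin r → M, D ⊔ Submodule.span k (range w) = N := by
  obtain ⟨K, hK⟩ := Submodule.exists_isCompl (D.submoduleOf N)
  have hKr : Module.finrank k K = r := by
    have := Submodule.finrank_add_eq_of_isCompl hK
    rw [(Submodule.submoduleOfEquivOfLe h).finrank_eq] at this
    omega
  let b := Module.finBasisOfFinrankEq k K hKr
  refine ⟨N.subtype ∘ K.subtype ∘ b, ?_⟩
  have hD : D = (D.submoduleOf N).map N.subtype := by
    rw [Submodule.submoduleOf, Submodule.map_comap_subtype, inf_eq_right.mpr h]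
  rw [range_comp, range_comp, Submodule.span_image, Submodule.span_image, b.span_eq,
    Submodule.map_subtype_top, hD, ← Submodule.map_sup, hK.sup_eq_top, Submodule.map_subtype_top]

variable {n k d : ℕ} {Y : Set (PrV n)} {z q : Fin n → ℂ} {f : MvPolynomial (Fin n) ℂ}

lemma exists_functionals_of_mem_affTangent
    (hfr : Module.finrank ℂ (affTangent Y z) = k + 1) (hq : q ∈ affTangent Y z) (hq0 : q ≠ 0) :
    ∃ μ : Fin k → Module.Dual ℂ (Fin n → ℂ), (∀ j, μ j q = 0) ∧
      ∀ ν : Module.Dual ℂ (Fin n → ℂ), ν q = 0 →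
        ∃ f ∈ idealOf Y, ν - jacLin f z ∈ Submodule.span ℂ (range μ) := by
  set D : Submodule ℂ (Module.Dual ℂ (Fin n → ℂ)) :=
    ((idealOf Y).restrictScalars ℂ).map (differentialAt z)
  set N : Submodule ℂ (Module.Dual ℂ (Fin n → ℂ)) := (Submodule.span ℂ {q}).dualAnnihilator
  have hN (ν : Module.Dual ℂ (Fin n → ℂ)) : ν ∈ N ↔ ν q = 0 := by
    rw [Submodule.mem_dualAnnihilator]
    refine ⟨fun h => h q (Submodule.mem_span_singleton_self q), fun h w hw => ?_⟩
    obtain ⟨c, rfl⟩ := Submodule.mem_span_singleton.mp hw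
    rw [map_smul, h, smul_zero]
  have hDN : D ≤ N := by
    rintro _ ⟨f, hf, rfl⟩
    exact (hN _).mpr (mem_affTangent.mp hq f hf)
  have hD : D.dualCoannihilator = affTangent Y z := by
    ext ξ
    simp [D, Submodule.mem_dualCoannihilator, mem_affTangent, differentialAt_apply]
  have hrank : Module.finrank ℂ N = Module.finrank ℂ D + k := by
    have hDrank := Subspace.finrank_add_finrank_dualCoannihilator_eq D
    have hNrank : Module.finrank ℂ (Submodule.span ℂ {q}) + Module.finrank ℂ N = _ :=
      Subspace.finrank_add_finrank_dualAnnihilator_eq (Submodule.span ℂ {q})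
    rw [hD, hfr] at hDrank
    rw [finrank_span_singleton hq0] at hNrank
    omega
  obtain ⟨μ, hμ⟩ := exists_sup_span_range_eq hDN hrank
  refine ⟨μ, fun j => (hN _).mp ?_, fun ν hν => ?_⟩
  · rw [← hμ]
    exact Submodule.mem_sup_right (Submodule.subset_span ⟨j, rfl⟩)
  · rw [← hN, ← hμ] at hν
    obtain ⟨_, ⟨f, hf, rfl⟩, y, hy, rfl⟩ := Submodule.mem_sup.mp hν
    exact ⟨f, hf, by rwa [differentialAt_apply, add_sub_cancel_left]⟩

/-- The ideal of the tangent vector `q` at `z`, regarded as a subscheme of length two: the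
polynomials vanishing at `z` together with their derivative in the direction `q`. -/
def tangentVectorIdeal (z q : Fin n → ℂ) : Ideal (MvPolynomial (Fin n) ℂ) where
  carrier := {g | eval z g = 0 ∧ jacLin g z q = 0}
  add_mem' hf hg := ⟨by rw [map_add, hf.1, hg.1, add_zero],
    by rw [jacLin_add, LinearMap.add_apply, hf.2, hg.2, add_zero]⟩
  zero_mem' := ⟨map_zero _, LinearMap.congr_fun (map_zero (differentialAt z)) q⟩
  smul_mem' f g hg := ⟨by rw [smul_eq_mul, map_mul, hg.1, mul_zero],
    by simp [smul_eq_mul, jacLin_mul, hg.1, hg.2]⟩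

lemma tangentVectorIdeal_le_vanishingIdeal (z q : Fin n → ℂ) :
    tangentVectorIdeal z q ≤ vanishingIdeal ℂ {z} :=
  fun g hg => (mem_vanishingIdeal_singleton_iff z g).mpr hg.1

variable {I J : Ideal (MvPolynomial (Fin n) ℂ)} {t : MvPolynomial (Fin n) ℂ}

lemma exists_direction_parametrization (hJ : J ≤ tangentVectorIdeal z q) (htz : eval z t = 0)
    (htq : jacLin t z q = 1)
    (hm : vanishingIdeal ℂ {z} ≤ J ⊔ Ideal.span {t} ⊔ vanishingIdeal ℂ {z} * vanishingIdeal ℂ {z}) :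
    ∃ (r : MvPolynomial (Fin n) ℂ) (u : Fin n → MvPolynomial (Fin n) ℂ), eval z r = 1 ∧
      (∀ i, eval z (u i) = q i) ∧ ∀ i, r * (X i - C (z i)) - u i * t ∈ J := by
  obtain ⟨r, hr, hru⟩ := exists_sub_one_mem_and_mul_sub_mul_mem (IsNoetherian.noetherian _) hm
  have hrz : eval z r = 1 := by
    rw [mem_vanishingIdeal_singleton_iff, map_sub, map_one, sub_eq_zero] at hr
    exact hr
  choose u hu using fun i => hru (X i - C (z i)) <| by
    rw [← affineForm_proj]
    exact affineForm_mem_vanishingIdeal z _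
  refine ⟨r, u, hrz, fun i => ?_, hu⟩
  have hder := (hJ (hu i)).2
  rw [jacLin_sub, jacLin_mul, jacLin_mul, ← affineForm_proj, jacLin_affineForm] at hder
  simp only [LinearMap.sub_apply, LinearMap.add_apply, LinearMap.smul_apply, htz, hrz, htq,
    eval_affineForm, sub_self, map_zero, LinearMap.proj_apply, smul_eq_mul] at hder
  linear_combination -hder

lemma vanishingIdeal_singleton_mem_minimalPrimes (hJ : J ≤ tangentVectorIdeal z q)
    (htz : eval z t = 0) (htq : jacLin t z q = 1)
    (hm : vanishingIdeal ℂ {z} ≤ J ⊔ Ideal.span {t} ⊔ vanishingIdeal ℂ {z} * vanishingIdeal ℂ {z})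
    (hf : f.IsHomogeneous d) (hfJ : bind₁ (fun i => X i - C (z i)) f ∈ J) (hfq : eval q f ≠ 0) :
    vanishingIdeal ℂ {z} ∈ J.minimalPrimes := by
  obtain ⟨r, u, hrz, huq, hru⟩ := exists_direction_parametrization hJ htz htq hm
  refine ⟨⟨inferInstance, hJ.trans (tangentVectorIdeal_le_vanishingIdeal z q)⟩, ?_⟩
  rintro P ⟨hP, hJP⟩ hPz
  refine vanishingIdeal_singleton_le fun i => ?_
  have htP : t ∈ P := by
    refine (hP.mem_or_mem (hJP (pow_mul_aeval_mem hf hru hfJ))).elim (hP.mem_of_pow_mem d) ?_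
    intro hfu
    have := (mem_vanishingIdeal_singleton_iff z _).mp (hPz hfu)
    rw [← bind₁, aeval_bind₁] at this
    simp only [aeval_eq_eval, huq] at this
    exact absurd this hfq
  have hrP : r * (X i - C (z i)) ∈ P :=
    (P.sub_mem_iff_left (P.mul_mem_left (u i) htP)).mp (hJP (hru i))
  refine (hP.mem_or_mem hrP).resolve_left fun hr => ?_
  have := (mem_vanishingIdeal_singleton_iff z r).mp (hPz hr)
  rw [aeval_eq_eval, hrz] at this
  exact one_ne_zero this

lemma affineForm_jacLin_mem_sup_sq {g : MvPolynomial (Fin n) ℂ} (hg : g ∈ I) (hgz : eval z g = 0) :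
    affineForm z (jacLin g z) ∈ I ⊔ vanishingIdeal ℂ {z} ^ 2 := by
  have htaylor := sub_C_sub_affineForm_mem_sq z g
  rw [hgz, C_0, sub_zero] at htaylor
  rw [← sub_sub_cancel g (affineForm z _)]
  exact sub_mem (Ideal.mem_sup_left hg) (Ideal.mem_sup_right htaylor)

lemma vanishingIdeal_singleton_le_sup_sq {μ : Fin k → Module.Dual ℂ (Fin n → ℂ)}
    {ν : Module.Dual ℂ (Fin n → ℂ)} (hI : I ≤ vanishingIdeal ℂ {z}) (hν : ν q = 1)
    (hμ : ∀ ν : Module.Dual ℂ (Fin n → ℂ), ν q = 0 →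
      ∃ f ∈ I, ν - jacLin f z ∈ Submodule.span ℂ (range μ)) :
    vanishingIdeal ℂ {z} ≤ I ⊔ Ideal.span (range (affineForm z ∘ μ)) ⊔
      Ideal.span {affineForm z ν} ⊔ vanishingIdeal ℂ {z} * vanishingIdeal ℂ {z} := by
  refine vanishingIdeal_singleton_le fun i => ?_
  obtain ⟨g, hg, hgμ⟩ := hμ (LinearMap.proj i - q i • ν) (by simp [hν])
  have hspan : affineForm z (LinearMap.proj i - q i • ν - jacLin g z) ∈
      Ideal.span (range (affineForm z ∘ μ)) := by
    have := Submodule.mem_map_of_mem (f := affineForm z) hgμ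
    rw [Submodule.map_span, ← range_comp] at this
    exact Submodule.span_le_restrictScalars ℂ _ _ this
  have hdecomp : X i - C (z i) =
      affineForm z (LinearMap.proj i - q i • ν - jacLin g z) + affineForm z (jacLin g z) +
        C (q i) * affineForm z ν := by
    rw [map_sub, map_sub, map_smul, affineForm_proj, smul_eq_C_mul]
    ring
  rw [hdecomp, ← pow_two]
  have hJ := affineForm_jacLin_mem_sup_sq hg ((mem_vanishingIdeal_singleton_iff z g).mp (hI hg))
  have hle : I ⊔ vanishingIdeal ℂ {z} ^ 2 ≤ I ⊔ Ideal.span (range (affineForm z ∘ μ)) ⊔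
      Ideal.span {affineForm z ν} ⊔ vanishingIdeal ℂ {z} ^ 2 :=
    sup_le_sup_right (le_sup_left.trans le_sup_left) _
  refine add_mem (add_mem ?_ (hle hJ)) ?_
  · exact Ideal.mem_sup_left (Ideal.mem_sup_left (Ideal.mem_sup_right hspan))
  · exact Ideal.mem_sup_left
      (Ideal.mem_sup_right (Ideal.mul_mem_left _ _ (Ideal.mem_span_singleton_self _)))

/-- Cutting the local ring at `z` by `k` local parameters killing `q` leaves a single parameter
`t`, in which `x - z` becomes `t u` with `u` specializing to `q` at `z`. If `f` did not vanish at
`q`, then `f (x - z) = t ^ d * f u = 0` would make `t` nilpotent, so `k` equations would already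
cut out the point `z`, against Krull's height theorem. -/
theorem eval_eq_zero_of_mem_affTangent (hY : (idealOf Y).IsPrime) (hz : z ∈ affCone Y)
    (hfr : Module.finrank ℂ (affTangent Y z) = k + 1)
    (hdim : ringKrullDim (MvPolynomial (Fin n) ℂ ⧸ idealOf Y) = (k + 1 : ℕ))
    (hf : f.IsHomogeneous d) (hfY : ∀ y ∈ affCone Y, eval (y - z) f = 0)
    (hq : q ∈ affTangent Y z) : eval q f = 0 := by
  by_cases hq0 : q = 0
  · rw [hq0, ← sub_self z]
    exact hfY z hz
  by_contra hfq
  obtain ⟨μ, hμq, hμ⟩ := exists_functionals_of_mem_affTangent hfr hq hq0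
  obtain ⟨ν, hν⟩ := Module.Projective.exists_dual_eq_one ℂ hq0
  have hIz : idealOf Y ≤ vanishingIdeal ℂ {z} := fun g hg =>
    (mem_vanishingIdeal_singleton_iff z g).mpr (mem_idealOf.mp hg z hz)
  have hJ : idealOf Y ⊔ Ideal.span (range (affineForm z ∘ μ)) ≤ tangentVectorIdeal z q := by
    refine sup_le (fun g hg => ⟨mem_idealOf.mp hg z hz, mem_affTangent.mp hq g hg⟩)
      (Ideal.span_le.mpr ?_)
    rintro _ ⟨j, rfl⟩
    exact ⟨by simp [eval_affineForm], by simp [jacLin_affineForm, hμq]⟩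
  have hfI : bind₁ (fun i => X i - C (z i)) f ∈ idealOf Y := mem_idealOf.mpr fun y hy => by
    rw [← aeval_eq_eval, aeval_bind₁]
    convert hfY y hy using 2
    simp
    rfl
  have hmin := vanishingIdeal_singleton_mem_minimalPrimes hJ (t := affineForm z ν)
    (by simp [eval_affineForm]) (by rw [jacLin_affineForm, hν])
    (vanishingIdeal_singleton_le_sup_sq hIz hν hμ) hf (Ideal.mem_sup_left hfI) hfq
  have hmax : ((vanishingIdeal ℂ {z}).map (Ideal.Quotient.mk (idealOf Y))).IsMaximal :=
    Ideal.IsMaximal.map_of_surjective_of_ker_le Ideal.Quotient.mk_surjective (by rwa [Ideal.mk_ker])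
  obtain ⟨s, hs, hheight⟩ := exists_ringKrullDim_eq_and_height_eq_of_finiteType (k := ℂ)
    (MvPolynomial (Fin n) ℂ ⧸ idealOf Y)
  have hle := height_map_mk_le_of_mem_minimalPrimes hmin
  have hsk : k + 1 = s := by
    rw [hdim] at hs
    exact_mod_cast hs
  rw [hheight _ hmax, ← hsk] at hle
  exact absurd (by exact_mod_cast hle) (Nat.not_succ_le_self k)

end TangentCone

section Secants

variable {n : ℕ} {Y : Set (PrV n)} {v w : Fin n → ℂ} {f : MvPolynomial (Fin n) ℂ}

lemma eval_zero_of_mem_idealOf (hY : Y.Nonempty) (hf : f ∈ idealOf Y) : eval 0 f = 0 :=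
  (mem_vanishingIdeal_singleton_iff 0 f).mp ((idealOf_lt_vanishingIdeal_zero hY).le hf)

lemma eval_smul_eq_zero_of_mem_idealOf (hf : f ∈ idealOf Y) (hv : v ∈ affCone Y) (c : ℂ) :
    eval (c • v) f = 0 := by
  rcases eq_or_ne c 0 with rfl | hc
  · rw [zero_smul]
    exact eval_zero_of_mem_idealOf ⟨_, hv.2⟩ hf
  · exact mem_idealOf.mp hf _ (smul_mem_affCone hv hc)

lemma exists_isHomogeneous_mem_idealOf_eval_ne_zero (hY : IsClosed Y) (hv : v ≠ 0)
    (hvY : v ∉ affCone Y) : ∃ d, ∃ f ∈ idealOf Y, f.IsHomogeneous d ∧ eval v f ≠ 0 := by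
  rw [mem_affCone_iff_of_isClosed hY] at hvY
  push Not at hvY
  obtain ⟨g, hg, hgv⟩ := hvY hv
  rw [← sum_homogeneousComponent g, map_sum] at hgv
  obtain ⟨d, -, hd⟩ := Finset.exists_ne_zero_of_sum_ne_zero hgv
  exact ⟨d, _, homogeneousComponent_mem_of_mem (isHomogeneous_idealOf Y) hg d,
    homogeneousComponent_isHomogeneous d g, hd⟩

lemma mem_affCone_projSub {W : Submodule ℂ (Fin n → ℂ)} :
    v ∈ affCone (projSub W) ↔ v ≠ 0 ∧ v ∈ W := by
  rcases eq_or_ne v 0 with rfl | hv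
  · exact iff_of_false (fun h => h.1 rfl) fun h => h.1 rfl
  obtain ⟨c, hc, hcv⟩ := mk_rep_eq_smul hv
  rw [mem_affCone_iff_mk_mem hv, and_iff_right hv, ← W.smul_mem_iff hc, ← hcv]
  rfl

lemma mem_affCone_lineThrough {y z : Fin n → ℂ} (hy : y ≠ 0) (hz : z ≠ 0) :
    v ∈ affCone (lineThrough (.mk ℂ y hy) (.mk ℂ z hz)) ↔
      v ≠ 0 ∧ ∃ a c : ℂ, a • y + c • z = v := by
  obtain ⟨s, hs, hsy⟩ := mk_rep_eq_smul hy
  obtain ⟨t, ht, htz⟩ := mk_rep_eq_smul hz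
  have hspan : Submodule.span ℂ {s • y, t • z} = Submodule.span ℂ {y, z} := by
    simp only [Submodule.span_insert, Submodule.span_singleton_smul_eq (IsUnit.mk0 _ hs),
      Submodule.span_singleton_smul_eq (IsUnit.mk0 _ ht)]
  rw [← Submodule.mem_span_pair, ← hspan, ← hsy, ← htz]
  exact mem_affCone_projSub

lemma nondegenerateSet_iff : NondegenerateSet Y ↔
    ∀ φ : Module.Dual ℂ (Fin n → ℂ), (∀ v ∈ affCone Y, φ v = 0) → φ = 0 := by
  constructor
  · intro h φ hφ
    by_contra hφ0
    exact h _ ⟨φ, hφ0, rfl⟩ fun x hx => hφ _ (rep_mem_affCone.mpr hx)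
  · rintro h _ ⟨φ, hφ0, rfl⟩ hY
    exact hφ0 (h φ fun v hv => (mem_affCone_projSub (W := φ.ker)).mp (affCone_mono hY hv) |>.2)

lemma NondegenerateSet.exists_ne (hn : 2 ≤ n) (hY : NondegenerateSet Y) (x : PrV n) :
    ∃ y ∈ Y, x ≠ y := by
  by_contra! hall
  have hlt : Submodule.span ℂ {x.rep} < ⊤ := by
    rw [lt_top_iff_ne_top]
    intro h
    have := finrank_span_singleton (K := ℂ) x.rep_nonzero
    rw [h, finrank_top, Module.finrank_fin_fun] at this
    omega
  obtain ⟨φ, hφ0, hφ⟩ := Submodule.exists_le_ker_of_lt_top _ hlt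
  exact hY _ ⟨φ, hφ0, rfl⟩ fun y hy =>
    hall y hy ▸ hφ (Submodule.mem_span_singleton_self _)

lemma lineThrough_subset_secantVariety {x y : PrV n} (hx : x ∈ Y) (hy : y ∈ Y) (hxy : x ≠ y) :
    lineThrough x y ⊆ secantVariety Y := by
  refine Subset.trans (fun p hp => ?_) subset_closure
  simp only [mem_iUnion]
  exact ⟨x, hx, y, hy, hxy, hp⟩

lemma NondegenerateSet.subset_secantVariety (hn : 2 ≤ n) (hY : NondegenerateSet Y) :
    Y ⊆ secantVariety Y := fun x hx => by
  obtain ⟨y, hy, hxy⟩ := hY.exists_ne hn x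
  exact lineThrough_subset_secantVariety hx hy hxy (Submodule.subset_span (mem_insert _ _))

lemma NondegenerateSet.add_smul_mem_affCone_secantVariety (hn : 2 ≤ n) (hY : NondegenerateSet Y)
    (hv : v ∈ affCone Y) (hw : w ∈ affCone Y) {a c : ℂ} (h : a • v + c • w ≠ 0) :
    a • v + c • w ∈ affCone (secantVariety Y) := by
  obtain ⟨hv0, hvY⟩ := hv
  obtain ⟨hw0, hwY⟩ := hw
  by_cases hvw : Projectivization.mk ℂ v hv0 = Projectivization.mk ℂ w hw0
  · obtain ⟨e, rfl⟩ := (Projectivization.mk_eq_mk_iff' ℂ _ _ hv0 hw0).mp hvw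
    rw [smul_smul, ← add_smul] at h ⊢
    exact affCone_mono (hY.subset_secantVariety hn)
      (smul_mem_affCone ⟨hw0, hwY⟩ (left_ne_zero_of_smul h))
  · exact affCone_mono (lineThrough_subset_secantVariety hvY hwY hvw)
      ((mem_affCone_lineThrough hv0 hw0).mpr ⟨h, a, c, rfl⟩)

lemma NondegenerateSet.exists_isHomogeneous_eval_add_smul_eq_zero (hn : 2 ≤ n) (hne : Y.Nonempty)
    (hY : NondegenerateSet Y) (hsec : secantVariety Y ≠ univ) :
    ∃ d, ∃ f : MvPolynomial (Fin n) ℂ, f.IsHomogeneous d ∧ (∃ q, eval q f ≠ 0) ∧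
      ∀ v ∈ affCone Y, ∀ w ∈ affCone Y, ∀ a c : ℂ, eval (a • v + c • w) f = 0 := by
  obtain ⟨x, hx⟩ := (ne_univ_iff_exists_notMem _).mp hsec
  obtain ⟨d, f, hfmem, hf, hfx⟩ := exists_isHomogeneous_mem_idealOf_eval_ne_zero isClosed_closure
    x.rep_nonzero (rep_mem_affCone.not.mpr hx)
  refine ⟨d, f, hf, ⟨_, hfx⟩, fun v hv w hw a c => ?_⟩
  rcases eq_or_ne (a • v + c • w) 0 with h | h
  · rw [h]
    exact eval_zero_of_mem_idealOf (hne.mono (hY.subset_secantVariety hn)) hfmem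
  · exact mem_idealOf.mp hfmem _ (hY.add_smul_mem_affCone_secantVariety hn hv hw h)

end Secants

section AffinePullback

variable {a b : ℕ}

/-- The pullback of polynomial functions along an affine map. -/
def affinePullback (φ : (Fin a → ℂ) →ᵃ[ℂ] (Fin b → ℂ)) :
    MvPolynomial (Fin b) ℂ →ₐ[ℂ] MvPolynomial (Fin a) ℂ :=
  bind₁ fun i => affineForm 0 (LinearMap.proj i ∘ₗ φ.linear) + C (φ 0 i)

lemma eval_affineForm_add_C (φ : (Fin a → ℂ) →ᵃ[ℂ] (Fin b → ℂ)) (v : Fin a → ℂ) :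
    (fun i => eval v (affineForm 0 (LinearMap.proj i ∘ₗ φ.linear) + C (φ 0 i))) = φ v := by
  conv_rhs => rw [φ.decomp]
  funext i
  simp [eval_affineForm]

lemma eval_affinePullback (φ : (Fin a → ℂ) →ᵃ[ℂ] (Fin b → ℂ)) (f : MvPolynomial (Fin b) ℂ)
    (v : Fin a → ℂ) : eval v (affinePullback φ f) = eval (φ v) f := by
  rw [← eval_affineForm_add_C φ v]
  exact eval₂Hom_bind₁ _ _ _ _

lemma jacLin_affinePullback (φ : (Fin a → ℂ) →ᵃ[ℂ] (Fin b → ℂ)) (f : MvPolynomial (Fin b) ℂ)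
    (v : Fin a → ℂ) : jacLin (affinePullback φ f) v = jacLin f (φ v) ∘ₗ φ.linear := by
  refine LinearMap.ext fun ξ => ?_
  rw [affinePullback, jacLin_bind₁, eval_affineForm_add_C]
  simp only [jacLin_add, jacLin_affineForm, jacLin_C, add_zero]
  rfl

lemma affinePullback_affineForm (L : (Fin a → ℂ) →ₗ[ℂ] (Fin b → ℂ)) (z : Fin a → ℂ)
    (μ : Module.Dual ℂ (Fin b → ℂ)) :
    affinePullback L.toAffineMap (affineForm (L z) μ) = affineForm z (μ ∘ₗ L) :=
  MvPolynomial.funext fun v => by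
    rw [eval_affinePullback, eval_affineForm, eval_affineForm, LinearMap.coe_toAffineMap,
      ← map_sub, LinearMap.comp_apply]

lemma affinePullback_surjective {φ : (Fin a → ℂ) →ᵃ[ℂ] (Fin b → ℂ)}
    {ρ : (Fin b → ℂ) →ᵃ[ℂ] (Fin a → ℂ)} (h : Function.LeftInverse ρ φ) :
    Function.Surjective (affinePullback φ) := fun f =>
  ⟨affinePullback ρ f, MvPolynomial.funext fun v => by
    rw [eval_affinePullback, eval_affinePullback, h]⟩

lemma idealOf_eq_ker_affinePullback {j : (Fin a → ℂ) →ₗ[ℂ] (Fin b → ℂ)}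
    (hj : Function.Injective j) {V : Set (PrV b)} [Nonempty (Fin a)]
    (hV : ∀ v, v ∈ affCone V ↔ v ≠ 0 ∧ v ∈ j.range) :
    idealOf V = RingHom.ker (affinePullback j.toAffineMap) := by
  have hmem {t : Fin a → ℂ} (ht : t ≠ 0) : j t ∈ affCone V :=
    (hV _).mpr ⟨(map_ne_zero_iff j hj).mpr ht, t, rfl⟩
  ext f
  rw [RingHom.mem_ker, mem_idealOf]
  refine ⟨fun hf => MvPolynomial.funext fun t => ?_, fun hf v hv => ?_⟩
  · rw [eval_affinePullback, LinearMap.coe_toAffineMap, map_zero]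
    rcases eq_or_ne t 0 with rfl | ht
    · rw [map_zero]
      exact eval_zero_of_mem_idealOf ⟨_, (hmem one_ne_zero).2⟩ (mem_idealOf.mpr hf)
    · exact hf _ (hmem ht)
  · obtain ⟨-, t, rfl⟩ := (hV v).mp hv
    rw [← LinearMap.coe_toAffineMap, ← eval_affinePullback, hf, map_zero]

lemma isClosed_projSub (W : Submodule ℂ (Fin b → ℂ)) : IsClosed (projSub W) := by
  refine isClosed_of_forall_mem_affCone fun v hv h => mem_affCone_projSub.mpr ⟨hv, ?_⟩
  rw [← Subspace.dualAnnihilator_dualCoannihilator_eq (W := W), Submodule.mem_dualCoannihilator]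
  intro μ hμ
  have := h (affineForm 0 μ) <| mem_idealOf.mpr fun w hw => by
    rw [eval_affineForm, sub_zero]
    exact (Submodule.mem_dualAnnihilator μ).mp hμ w (mem_affCone_projSub.mp hw).2
  rwa [eval_affineForm, sub_zero] at this

lemma pdim_projSub (W : Submodule ℂ (Fin b → ℂ)) (hW : Module.finrank ℂ W = a + 1) :
    pdim (projSub W) = a := by
  let j : (Fin (a + 1) → ℂ) →ₗ[ℂ] (Fin b → ℂ) :=
    W.subtype ∘ₗ (Module.finBasisOfFinrankEq ℂ W hW).equivFun.symm.toLinearMap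
  have hj : Function.Injective j := W.injective_subtype.comp (LinearEquiv.injective _)
  have hrange : j.range = W := by
    rw [LinearMap.range_comp, LinearEquiv.range, Submodule.map_subtype_top]
  obtain ⟨ρ, hρ⟩ := j.exists_leftInverse_of_injective (LinearMap.ker_eq_bot.mpr hj)
  have hsurj := affinePullback_surjective (φ := j.toAffineMap) (ρ := ρ.toAffineMap)
    (LinearMap.congr_fun hρ)
  have hI : idealOf (projSub W) = RingHom.ker (affinePullback j.toAffineMap) :=
    idealOf_eq_ker_affinePullback hj fun v => by rw [mem_affCone_projSub, hrange]
  have hprime : (idealOf (projSub W)).IsPrime := hI ▸ RingHom.ker_isPrime _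
  have hne : (projSub W).Nonempty := by
    have h : j 1 ∈ affCone (projSub W) := mem_affCone_projSub.mpr
      ⟨(map_ne_zero_iff j hj).mpr one_ne_zero, hrange ▸ LinearMap.mem_range_self j 1⟩
    exact ⟨_, h.2⟩
  have hdim := pdim_add_one_eq_ringKrullDim (isClosed_projSub W)
    (isIrreducible_of_isPrime_idealOf hne hprime)
  rw [hI, ringKrullDim_eq_of_ringEquiv (Ideal.quotientKerAlgEquivOfSurjective hsurj).toRingEquiv,
    MvPolynomial.ringKrullDim_of_isNoetherianRing, ringKrullDim_eq_zero_of_field, zero_add,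
    Nat.card_fin, Nat.cast_add, Nat.cast_one] at hdim
  exact ENat.WithBot.add_one_cancel.mp hdim

end AffinePullback

section Cones

variable {n p k : ℕ}

/-- `Y'` is the cone over `Y` in the coordinates `S`: its affine cone consists of the nonzero `x`
whose first component under `S` is either zero (the vertex) or a point of the affine cone of `Y`. -/
def IsCone (S : (Fin n → ℂ) ≃ₗ[ℂ] (Fin p → ℂ) × (Fin k → ℂ)) (Y : Set (PrV p))
    (Y' : Set (PrV n)) : Prop :=
  ∀ x, x ∈ affCone Y' ↔ x ≠ 0 ∧ ((S x).1 = 0 ∨ (S x).1 ∈ affCone Y)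

/-- The slice `z ↦ (z, t)` of the ambient space of a cone. -/
def coneSlice (S : (Fin n → ℂ) ≃ₗ[ℂ] (Fin p → ℂ) × (Fin k → ℂ)) (t : Fin k → ℂ) :
    (Fin p → ℂ) →ᵃ[ℂ] (Fin n → ℂ) :=
  (S.symm.toLinearMap ∘ₗ LinearMap.inl ℂ _ _).toAffineMap + AffineMap.const ℂ _ (S.symm (0, t))

/-- The linear projection of the ambient space of a cone from the vertex onto that of the base. -/
def coneBase (S : (Fin n → ℂ) ≃ₗ[ℂ] (Fin p → ℂ) × (Fin k → ℂ)) :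
    (Fin n → ℂ) →ₗ[ℂ] (Fin p → ℂ) :=
  LinearMap.fst ℂ _ _ ∘ₗ S.toLinearMap

variable {S : (Fin n → ℂ) ≃ₗ[ℂ] (Fin p → ℂ) × (Fin k → ℂ)} {Y : Set (PrV p)} {Y' : Set (PrV n)}
  {f : MvPolynomial (Fin n) ℂ} {v : Fin n → ℂ}

lemma coneSlice_apply (t : Fin k → ℂ) (z : Fin p → ℂ) : coneSlice S t z = S.symm (z, t) := by
  simp [coneSlice, ← map_add]

lemma linear_coneSlice (t : Fin k → ℂ) :
    (coneSlice S t).linear = S.symm.toLinearMap ∘ₗ LinearMap.inl ℂ _ _ := by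
  simp [coneSlice]

lemma coneBase_apply (x : Fin n → ℂ) : coneBase S x = (S x).1 := rfl

lemma coneBase_surjective : Function.Surjective (coneBase S) :=
  Prod.fst_surjective.comp S.surjective

lemma finrank_comap_of_surjective {K V W : Type*} [Field K] [AddCommGroup V] [Module K V]
    [FiniteDimensional K V] [AddCommGroup W] [Module K W] {g : V →ₗ[K] W}
    (hg : Function.Surjective g) (T : Submodule K W) :
    Module.finrank K (T.comap g) = Module.finrank K T + Module.finrank K g.ker := by
  have h := (g.domRestrict (T.comap g)).finrank_range_add_finrank_ker
  rw [LinearMap.range_domRestrict, Submodule.map_comap_eq_of_surjective hg,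
    LinearMap.ker_domRestrict] at h
  rw [← h, (Submodule.comapSubtypeEquivOfLe (LinearMap.ker_le_comap g)).finrank_eq]

lemma finrank_ker_coneBase : Module.finrank ℂ (coneBase S).ker = k := by
  have h := finrank_comap_of_surjective (coneBase_surjective (S := S)) ⊤
  rw [Submodule.comap_top, finrank_top, finrank_top, S.finrank_eq, Module.finrank_prod,
    Module.finrank_fin_fun, Module.finrank_fin_fun] at h
  exact (Nat.add_left_cancel h).symm

namespace IsCone

lemma eval_eq_zero (h : IsCone S Y Y') (hne : Y'.Nonempty) (hf : f ∈ idealOf Y')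
    (hv : (S v).1 = 0 ∨ (S v).1 ∈ affCone Y) : eval v f = 0 := by
  rcases eq_or_ne v 0 with rfl | hv0
  · exact eval_zero_of_mem_idealOf hne hf
  · exact mem_idealOf.mp hf v ((h v).mpr ⟨hv0, hv⟩)

lemma mem_affCone (h : IsCone S Y Y') (hv : (S v).1 ∈ affCone Y) : v ∈ affCone Y' :=
  (h v).mpr ⟨fun h0 => hv.1 (by simp [h0]), .inr hv⟩

lemma nonempty (h : IsCone S Y Y') (hY : Y.Nonempty) : Y'.Nonempty := by
  obtain ⟨x, hx⟩ := hY
  exact ⟨_, (h.mem_affCone (v := S.symm (x.rep, 0)) (by simpa using rep_mem_affCone.mpr hx)).2⟩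

lemma mem_idealOf_iff (h : IsCone S Y Y') (hY : Y.Nonempty) :
    f ∈ idealOf Y' ↔ ∀ t, affinePullback (coneSlice S t) f ∈ idealOf Y := by
  refine ⟨fun hf t => mem_idealOf.mpr fun z hz => ?_, fun hf => mem_idealOf.mpr fun v hv => ?_⟩
  · rw [eval_affinePullback, coneSlice_apply]
    exact h.eval_eq_zero (h.nonempty hY) hf (.inr (by rwa [S.apply_symm_apply]))
  · have hslice : eval v f = eval (S v).1 (affinePullback (coneSlice S (S v).2) f) := by
      rw [eval_affinePullback, coneSlice_apply, Prod.mk.eta, S.symm_apply_apply]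
    rw [hslice]
    rcases ((h v).mp hv).2 with h0 | hvY
    · rw [h0]
      exact eval_zero_of_mem_idealOf hY (hf _)
    · exact mem_idealOf.mp (hf _) _ hvY

lemma affinePullback_coneBase_mem (h : IsCone S Y Y') (hY : Y.Nonempty)
    {g : MvPolynomial (Fin p) ℂ} (hg : g ∈ idealOf Y) :
    affinePullback (coneBase S).toAffineMap g ∈ idealOf Y' :=
  mem_idealOf.mpr fun v hv => by
    rw [eval_affinePullback, LinearMap.coe_toAffineMap, coneBase_apply]
    rcases ((h v).mp hv).2 with h0 | hvY
    · rw [h0]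
      exact eval_zero_of_mem_idealOf hY hg
    · exact mem_idealOf.mp hg _ hvY

lemma isClosed (h : IsCone S Y Y') (hY : Y.Nonempty) (hcl : IsClosed Y) : IsClosed Y' := by
  refine isClosed_of_forall_mem_affCone fun v hv hvan => (h v).mpr ⟨hv, ?_⟩
  rw [or_iff_not_imp_left, mem_affCone_iff_of_isClosed hcl]
  refine fun h0 => ⟨h0, fun g hg => ?_⟩
  have := hvan _ (h.affinePullback_coneBase_mem hY hg)
  rwa [eval_affinePullback] at this

lemma nondegenerateSet (h : IsCone S Y Y') (hY : NondegenerateSet Y) : NondegenerateSet Y' := by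
  refine nondegenerateSet_iff.mpr fun φ hφ => ?_
  have hbase : φ ∘ₗ S.symm.toLinearMap ∘ₗ LinearMap.inl ℂ _ _ = 0 :=
    nondegenerateSet_iff.mp hY _ fun z hz => hφ _ (h.mem_affCone (by simpa using hz))
  have hvertex (t : Fin k → ℂ) : φ (S.symm (0, t)) = 0 := by
    rcases eq_or_ne t 0 with rfl | ht
    · rw [← Prod.zero_eq_mk, map_zero, map_zero]
    · exact hφ _ ((h _).mpr ⟨by simpa using ht, .inl (by simp)⟩)
  refine LinearMap.ext fun v => ?_
  obtain ⟨⟨z, t⟩, rfl⟩ := S.symm.surjective v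
  have hsplit : S.symm (z, t) = S.symm (z, 0) + S.symm (0, t) := by
    rw [← map_add, Prod.mk_add_mk, add_zero, zero_add]
  rw [hsplit, map_add, hvertex, add_zero]
  exact LinearMap.congr_fun hbase z

lemma affTangent_eq_comap (h : IsCone S Y Y') (hv : (S v).1 ∈ affCone Y) :
    affTangent Y' v = (affTangent Y (S v).1).comap (coneBase S) := by
  have hY : Y.Nonempty := ⟨_, hv.2⟩
  refine le_antisymm (fun ξ hξ => mem_affTangent.mpr fun g hg => ?_)
    (fun ξ hξ => mem_affTangent.mpr fun f hf => ?_)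
  · have := mem_affTangent.mp hξ _ (h.affinePullback_coneBase_mem hY hg)
    rwa [jacLin_affinePullback] at this
  · have hbase : jacLin f v (S.symm ((S ξ).1, 0)) = 0 := by
      have := mem_affTangent.mp hξ _ ((h.mem_idealOf_iff hY).mp hf (S v).2)
      rwa [jacLin_affinePullback, coneSlice_apply, Prod.mk.eta, S.symm_apply_apply,
        linear_coneSlice] at this
    have hvertex : jacLin f v (S.symm (0, (S ξ).2)) = 0 :=
      jacLin_eq_zero_of_forall_eval_add_smul fun t _ =>
        h.eval_eq_zero (h.nonempty hY) hf (.inr (by simpa using hv))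
    have hξ' : ξ = S.symm ((S ξ).1, 0) + S.symm (0, (S ξ).2) := by
      rw [← map_add, Prod.mk_add_mk, add_zero, zero_add, Prod.mk.eta, S.symm_apply_apply]
    rw [hξ', map_add, hbase, hvertex, add_zero]

lemma finrank_affTangent (h : IsCone S Y Y') (hv : (S v).1 ∈ affCone Y) :
    Module.finrank ℂ (affTangent Y' v) = Module.finrank ℂ (affTangent Y (S v).1) + k := by
  rw [h.affTangent_eq_comap hv, finrank_comap_of_surjective coneBase_surjective,
    finrank_ker_coneBase]

lemma affTangent_eq_top (h : IsCone S Y Y') (hY : Y.Nonempty) (hnd : NondegenerateSet Y)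
    (hv : (S v).1 = 0) : affTangent Y' v = ⊤ := by
  have hline {f} (hf : f ∈ idealOf Y') (u : Fin n → ℂ) (hu : (S u).1 = 0 ∨ (S u).1 ∈ affCone Y) :
      jacLin f v u = 0 :=
    jacLin_eq_zero_of_forall_eval_add_smul fun t ht => by
      refine h.eval_eq_zero (h.nonempty hY) hf (hu.imp (fun hu => ?_) fun hu => ?_)
      · simp [hv, hu]
      · simpa [hv] using smul_mem_affCone hu ht
  refine eq_top_iff.mpr fun ξ _ => mem_affTangent.mpr fun f hf => ?_
  exact LinearMap.congr_fun (nondegenerateSet_iff.mp (h.nondegenerateSet hnd) (jacLin f v)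
    fun u hu => hline hf u ((h u).mp hu).2) ξ

end IsCone

section Coordinates

variable {e : Fin p ⊕ Fin k ≃ Fin n} {I : Ideal (MvPolynomial (Fin p) ℂ)}

/-- The splitting of `ℂⁿ` induced by a partition of the coordinates into two blocks. -/
def splitCoords (e : Fin p ⊕ Fin k ≃ Fin n) : (Fin n → ℂ) ≃ₗ[ℂ] (Fin p → ℂ) × (Fin k → ℂ) :=
  LinearEquiv.funCongrLeft ℂ ℂ e ≪≫ₗ LinearEquiv.sumArrowLequivProdArrow (Fin p) (Fin k) ℂ ℂ

lemma splitCoords_symm_apply (z : Fin p → ℂ) (t : Fin k → ℂ) (s : Fin p ⊕ Fin k) :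
    (splitCoords e).symm (z, t) (e s) = Sum.elim z t s := by
  cases s <;> simp [splitCoords, LinearEquiv.funCongrLeft_symm]

/-- Reduction modulo the ideal `I` of the base of a cone, as a map onto polynomials in the vertex
coordinates over the coordinate ring of the base. -/
def coneReduction (e : Fin p ⊕ Fin k ≃ Fin n) (I : Ideal (MvPolynomial (Fin p) ℂ)) :
    MvPolynomial (Fin n) ℂ →+* MvPolynomial (Fin k) (MvPolynomial (Fin p) ℂ ⧸ I) :=
  (MvPolynomial.map (Ideal.Quotient.mk I)).comp
    ((renameEquiv ℂ (e.symm.trans (Equiv.sumComm _ _))).trans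
      (sumAlgEquiv ℂ (Fin k) (Fin p))).toRingEquiv.toRingHom

lemma coneReduction_surjective : Function.Surjective (coneReduction e I) :=
  (map_surjective _ Ideal.Quotient.mk_surjective).comp (AlgEquiv.surjective _)

lemma eval_map_coneReduction {z : Fin p → ℂ} (hz : ∀ g ∈ I, eval z g = 0) (t : Fin k → ℂ)
    (f : MvPolynomial (Fin n) ℂ) :
    eval t (MvPolynomial.map (Ideal.Quotient.lift I (eval z) hz) (coneReduction e I f)) =
      eval ((splitCoords e).symm (z, t)) f := by
  have key : ((eval t).comp (MvPolynomial.map (Ideal.Quotient.lift I (eval z) hz))).comp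
      (coneReduction e I) = eval ((splitCoords e).symm (z, t)) := by
    refine MvPolynomial.ringHom_ext (fun c => by simp [coneReduction]) fun i => ?_
    obtain ⟨s, rfl⟩ := e.surjective i
    rw [eval_X, splitCoords_symm_apply]
    cases s <;> simp [coneReduction]
  exact congrArg (fun φ : MvPolynomial (Fin n) ℂ →+* ℂ => φ f) key

lemma IsCone.ker_coneReduction (h : IsCone (splitCoords e) Y Y') (hY : Y.Nonempty) :
    RingHom.ker (coneReduction e (idealOf Y)) = idealOf Y' := by
  have hvan {z} (hz : z ∈ affCone Y) : ∀ g ∈ idealOf Y, eval z g = 0 :=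
    fun g hg => mem_idealOf.mp hg z hz
  ext f
  rw [RingHom.mem_ker, h.mem_idealOf_iff hY]
  constructor
  · refine fun hf t => mem_idealOf.mpr fun z hz => ?_
    rw [eval_affinePullback, coneSlice_apply, ← eval_map_coneReduction (hvan hz), hf, map_zero,
      map_zero]
  · refine fun hf => MvPolynomial.ext _ _ fun m => ?_
    obtain ⟨g, hg⟩ := Ideal.Quotient.mk_surjective (coeff m (coneReduction e (idealOf Y) f))
    rw [← hg, coeff_zero, Ideal.Quotient.eq_zero_iff_mem, mem_idealOf]
    intro z hz
    have hmap : MvPolynomial.map (Ideal.Quotient.lift _ (eval z) (hvan hz))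
        (coneReduction e (idealOf Y) f) = 0 := MvPolynomial.funext fun t => by
      rw [eval_map_coneReduction, ← coneSlice_apply, ← eval_affinePullback, map_zero]
      exact mem_idealOf.mp (hf t) z hz
    simpa [coeff_map, ← hg] using congrArg (coeff m) hmap

lemma IsCone.isIrreducible (h : IsCone (splitCoords e) Y Y') (hY : IsIrreducible Y) :
    IsIrreducible Y' := by
  have := isPrime_idealOf hY
  refine isIrreducible_of_isPrime_idealOf (h.nonempty hY.1) ?_
  rw [← h.ker_coneReduction hY.1]
  exact RingHom.ker_isPrime _

lemma IsCone.ringKrullDim_eq (h : IsCone (splitCoords e) Y Y') (hY : Y.Nonempty) :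
    ringKrullDim (MvPolynomial (Fin n) ℂ ⧸ idealOf Y') =
      ringKrullDim (MvPolynomial (Fin p) ℂ ⧸ idealOf Y) + k := by
  rw [← h.ker_coneReduction hY, ringKrullDim_eq_of_ringEquiv
    (RingHom.quotientKerEquivOfSurjective coneReduction_surjective),
    MvPolynomial.ringKrullDim_of_isNoetherianRing, Nat.card_fin]

end Coordinates

end Cones

section InjectiveProjections

variable {n a : ℕ} {L : (Fin n → ℂ) →ₗ[ℂ] (Fin a → ℂ)} {Q x : Fin n → ℂ} {Y : Set (PrV n)}
  {W : Set (PrV a)} {σ : (Fin a → ℂ) →ₗ[ℂ] (Fin n → ℂ)} {l : Module.Dual ℂ (Fin n → ℂ)}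

lemma eq_of_vanishingIdeal_singleton_le {τ k : Type*} [Field k] {y z : τ → k}
    (h : vanishingIdeal k {y} ≤ vanishingIdeal k {z}) : y = z := by
  funext i
  have hi : X i - C (y i) ∈ vanishingIdeal k {z} := h (by simp)
  simpa [sub_eq_zero, eq_comm] using hi

lemma comap_affinePullback_vanishingIdeal_singleton (φ : (Fin n → ℂ) →ᵃ[ℂ] (Fin a → ℂ))
    (x : Fin n → ℂ) :
    (vanishingIdeal ℂ {x}).comap (affinePullback φ) = vanishingIdeal ℂ {φ x} := by
  ext f
  simp [Ideal.mem_comap, aeval_eq_eval, eval_affinePullback]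

lemma mem_affCone_of_idealOf_le_vanishingIdeal (hY : IsClosed Y) (hx : x ≠ 0)
    (h : idealOf Y ≤ vanishingIdeal ℂ {x}) : x ∈ affCone Y :=
  (mem_affCone_iff_of_isClosed hY).mpr
    ⟨hx, fun f hf => (mem_vanishingIdeal_singleton_iff x f).mp (h hf)⟩

lemma self_mem_affTangent (hx : x ∈ affCone Y) : x ∈ affTangent Y x := by
  refine mem_affTangent.mpr fun f hf => jacLin_eq_zero_of_forall_eval_add_smul fun t _ => ?_
  have hsmul : x + t • x = (1 + t) • x := by rw [add_smul, one_smul]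
  rw [hsmul]
  exact eval_smul_eq_zero_of_mem_idealOf hf hx _

/-- Nakayama: if `S = ψ(R) + 𝔪 S`, then locally at `𝔪` every element of `S` lies in `ψ(R)`. -/
lemma exists_sub_one_mem_and_map_mul_eq_map {R S : Type*} [CommRing R] [CommRing S] {ψ : R →+* S}
    (hψ : ψ.Finite) {𝔪 : Ideal R} (h : ∀ s, ∃ c, s - ψ c ∈ 𝔪.map ψ) (u : S) :
    ∃ r g, r - 1 ∈ 𝔪 ∧ ψ r * u = ψ g := by
  algebraize [ψ]
  have hfin : Module.Finite R S := hψ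
  have hle : (⊤ : Submodule R S) ≤ (Algebra.linearMap R S).range ⊔ 𝔪 • ⊤ := by
    rintro s -
    obtain ⟨c, hc⟩ := h s
    rw [← add_sub_cancel (ψ c) s]
    exact Submodule.add_mem_sup ⟨c, rfl⟩ (by rwa [Ideal.smul_top_eq_map])
  obtain ⟨r, hr, hrS⟩ := Submodule.exists_sub_one_mem_and_smul_le_of_fg_of_le_sup
    hfin.fg_top le_rfl hle
  obtain ⟨g, hg⟩ := hrS (Submodule.smul_mem_pointwise_smul u r ⊤ trivial)
  exact ⟨r, g, hr, (Algebra.smul_def r u).symm.trans hg.symm⟩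

/-- `W` is the image of the variety `Y` under the projection from the point `Q` induced by the
linear map `L`, and `L` is injective on the affine cone of `Y`. As `W` is required to have a
well-defined image of every point of `Y`, the centre does not lie on `Y`. -/
structure IsInjectiveProjection (L : (Fin n → ℂ) →ₗ[ℂ] (Fin a → ℂ)) (Q : Fin n → ℂ)
    (Y : Set (PrV n)) (W : Set (PrV a)) : Prop where
  isClosed : IsClosed Y
  isIrreducible : IsIrreducible Y
  surjective : Function.Surjective L
  ker_eq : L.ker = Submodule.span ℂ {Q}
  center_ne_zero : Q ≠ 0
  mem_affCone_iff : ∀ v, v ∈ affCone W ↔ ∃ x ∈ affCone Y, L x = v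
  injOn : InjOn L (affCone Y)

/-- The comorphism of the projection `L` of `Y`: pullback of polynomials along `L`, read modulo
the ideal of `Y`. -/
def projectionComorphism (L : (Fin n → ℂ) →ₗ[ℂ] (Fin a → ℂ)) (Y : Set (PrV n)) :
    MvPolynomial (Fin a) ℂ →ₐ[ℂ] MvPolynomial (Fin n) ℂ ⧸ idealOf Y :=
  (Ideal.Quotient.mkₐ ℂ (idealOf Y)).comp (affinePullback L.toAffineMap)

lemma projectionComorphism_apply (f : MvPolynomial (Fin a) ℂ) :
    projectionComorphism L Y f = Ideal.Quotient.mk (idealOf Y) (affinePullback L.toAffineMap f) :=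
  rfl

lemma exists_splitting_of_ker_eq_span_singleton (hL : Function.Surjective L)
    (hker : L.ker = Submodule.span ℂ {Q}) (hQ : Q ≠ 0) :
    ∃ (σ : (Fin a → ℂ) →ₗ[ℂ] (Fin n → ℂ)) (l : Module.Dual ℂ (Fin n → ℂ)),
      ∀ x, σ (L x) + l x • Q = x := by
  obtain ⟨σ, hσ⟩ := L.exists_rightInverse_of_surjective (LinearMap.range_eq_top.mpr hL)
  obtain ⟨μ, hμ⟩ : ∃ μ : Module.Dual ℂ (Fin n → ℂ), μ Q = 1 :=
    Module.Projective.exists_dual_eq_one ℂ hQ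
  refine ⟨σ, μ ∘ₗ (LinearMap.id - σ ∘ₗ L), fun x => ?_⟩
  have hmem : x - σ (L x) ∈ L.ker := by
    rw [LinearMap.mem_ker, map_sub, sub_eq_zero]
    exact (LinearMap.congr_fun hσ (L x)).symm
  obtain ⟨c, hc⟩ := Submodule.mem_span_singleton.mp (hker ▸ hmem)
  have hcoord : (μ ∘ₗ (LinearMap.id - σ ∘ₗ L)) x = c := by
    change μ (x - σ (L x)) = c
    rw [← hc, map_smul, hμ, smul_eq_mul, mul_one]
  rw [hcoord, hc, add_sub_cancel]

namespace IsInjectiveProjection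

lemma mem_idealOf_iff (h : IsInjectiveProjection L Q Y W) {f : MvPolynomial (Fin a) ℂ} :
    f ∈ idealOf W ↔ affinePullback L.toAffineMap f ∈ idealOf Y := by
  simp only [mem_idealOf, h.mem_affCone_iff, forall_exists_index, and_imp,
    forall_apply_eq_imp_iff₂, eval_affinePullback, LinearMap.coe_toAffineMap]

lemma ker_projectionComorphism (h : IsInjectiveProjection L Q Y W) :
    RingHom.ker (projectionComorphism L Y) = idealOf W := by
  ext f
  rw [RingHom.mem_ker, projectionComorphism_apply, Ideal.Quotient.eq_zero_iff_mem,
    h.mem_idealOf_iff]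

lemma map_mem_affCone (h : IsInjectiveProjection L Q Y W) (hx : x ∈ affCone Y) :
    L x ∈ affCone W :=
  (h.mem_affCone_iff _).mpr ⟨x, hx, rfl⟩

lemma isIrreducible_image (h : IsInjectiveProjection L Q Y W) : IsIrreducible W := by
  have := isPrime_idealOf h.isIrreducible
  obtain ⟨y, hy⟩ := h.isIrreducible.1
  refine isIrreducible_of_isPrime_idealOf ⟨_, (h.map_mem_affCone (rep_mem_affCone.mpr hy)).2⟩ ?_
  rw [← h.ker_projectionComorphism]
  exact RingHom.ker_isPrime _

lemma map_center (h : IsInjectiveProjection L Q Y W) : L Q = 0 :=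
  LinearMap.mem_ker.mp (h.ker_eq ▸ Submodule.mem_span_singleton_self Q)

lemma center_notMem_affCone (h : IsInjectiveProjection L Q Y W) : Q ∉ affCone Y :=
  fun hQ => (h.map_mem_affCone hQ).1 h.map_center

lemma exists_splitting (h : IsInjectiveProjection L Q Y W) :
    ∃ (σ : (Fin a → ℂ) →ₗ[ℂ] (Fin n → ℂ)) (l : Module.Dual ℂ (Fin n → ℂ)),
      ∀ x, σ (L x) + l x • Q = x :=
  exists_splitting_of_ker_eq_span_singleton h.surjective h.ker_eq h.center_ne_zero

lemma affinePullback_affineForm_add (hσ : ∀ x, σ (L x) + l x • Q = x) (i : Fin n) :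
    affinePullback L.toAffineMap (affineForm 0 (LinearMap.proj i ∘ₗ σ)) +
      affineForm 0 l * C (Q i) = X i :=
  MvPolynomial.funext fun v => by
    simpa [eval_affinePullback, eval_affineForm] using congrFun (hσ v) i

/-- A form in the ideal of `Y` not vanishing at the centre, restricted to the lines through the
centre, is an equation of integral dependence. -/
lemma isIntegralElem_affineForm (h : IsInjectiveProjection L Q Y W)
    (hσ : ∀ x, σ (L x) + l x • Q = x) : (projectionComorphism L Y).toRingHom.IsIntegralElem
      (Ideal.Quotient.mk (idealOf Y) (affineForm 0 l)) := by
  obtain ⟨d, F, hF, hd, hFQ⟩ := exists_isHomogeneous_mem_idealOf_eval_ne_zero h.isClosed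
    h.center_ne_zero h.center_notMem_affCone
  let G : MvPolynomial (Fin n) ℂ := C (eval Q F)⁻¹ * F
  have hG : G.IsHomogeneous d := by
    simpa using (isHomogeneous_C (Fin n) (eval Q F)⁻¹).mul hd
  have hGQ : aeval (fun i => (C (Q i) : MvPolynomial (Fin a) ℂ)) G = 1 := by
    refine (aeval_algebraMap_apply (MvPolynomial (Fin a) ℂ) Q G).trans ?_
    simp [G, aeval_eq_eval, hFQ]
  refine ⟨lineRestriction (fun i => affineForm 0 (LinearMap.proj i ∘ₗ σ)) (fun i => C (Q i)) G,
    Polynomial.monic_of_natDegree_le_of_coeff_eq_one d (natDegree_lineRestriction_le hG _ _)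
      ((coeff_lineRestriction_of_isHomogeneous hG _ _).trans hGQ), ?_⟩
  refine (eval₂_lineRestriction (projectionComorphism L Y) _ _ G _).trans ?_
  have hcoord (i : Fin n) : projectionComorphism L Y (affineForm 0 (LinearMap.proj i ∘ₗ σ)) +
      Ideal.Quotient.mk (idealOf Y) (affineForm 0 l) * projectionComorphism L Y (C (Q i)) =
      Ideal.Quotient.mkₐ ℂ (idealOf Y) (X i) := by
    rw [← affinePullback_affineForm_add hσ i, map_add, map_mul, ← algebraMap_eq, ← algebraMap_eq,
      AlgHom.commutes, AlgHom.commutes]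
    rfl
  simp only [hcoord, ← comp_aeval_apply, aeval_X_left_apply]
  exact Ideal.Quotient.eq_zero_iff_mem.mpr (Ideal.mul_mem_left _ _ hF)

lemma isIntegral (h : IsInjectiveProjection L Q Y W) :
    (projectionComorphism L Y).toRingHom.IsIntegral := by
  obtain ⟨σ, l, hσ⟩ := h.exists_splitting
  have hmap f := RingHom.isIntegralElem_map (projectionComorphism L Y).toRingHom (x := f)
  intro s
  obtain ⟨f, rfl⟩ := Ideal.Quotient.mk_surjective s
  induction f using MvPolynomial.induction_on with
  | C c => exact (AlgHom.commutes (projectionComorphism L Y) c) ▸ hmap (C c)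
  | add f g hf hg => exact map_add (Ideal.Quotient.mk (idealOf Y)) f g ▸ hf.add _ hg
  | mul_X f i hf =>
    rw [map_mul, ← affinePullback_affineForm_add hσ i, map_add, map_mul]
    refine hf.mul _ ((hmap _).add _ ((h.isIntegralElem_affineForm hσ).mul _ ?_))
    exact (AlgHom.commutes (projectionComorphism L Y) (Q i)) ▸ hmap (C (Q i))

lemma ringKrullDim_eq (h : IsInjectiveProjection L Q Y W) :
    ringKrullDim (MvPolynomial (Fin a) ℂ ⧸ idealOf W) =
      ringKrullDim (MvPolynomial (Fin n) ℂ ⧸ idealOf Y) := by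
  rw [← h.ker_projectionComorphism]
  exact (ringKrullDim_eq_quotient_ker h.isIntegral).symm

/-- Maximal ideals of the coordinate ring of the cone over the image lift to maximal ideals
upstairs, as the comorphism is integral. -/
lemma isClosed_image (h : IsInjectiveProjection L Q Y W) : IsClosed W := by
  refine isClosed_of_forall_mem_affCone fun v hv hvW => ?_
  algebraize [(projectionComorphism L Y).toRingHom]
  have : Algebra.IsIntegral (MvPolynomial (Fin a) ℂ) (MvPolynomial (Fin n) ℂ ⧸ idealOf Y) :=
    ⟨h.isIntegral⟩
  have hker : RingHom.ker (projectionComorphism L Y) ≤ vanishingIdeal ℂ {v} := fun f hf =>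
    (mem_vanishingIdeal_singleton_iff v f).mpr (hvW f (h.ker_projectionComorphism ▸ hf))
  have : (vanishingIdeal ℂ {v}).IsMaximal := inferInstance
  obtain ⟨M, hM, hMv⟩ := Ideal.exists_ideal_over_maximal_of_isIntegral
    (S := MvPolynomial (Fin n) ℂ ⧸ idealOf Y) (vanishingIdeal ℂ {v}) hker
  obtain ⟨x, hx⟩ := isMaximal_iff_eq_vanishingIdeal_singleton.mp
    (Ideal.comap_isMaximal_of_surjective (Ideal.Quotient.mk (idealOf Y)) (K := M)
      Ideal.Quotient.mk_surjective)
  have hLx : L x = v := by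
    refine eq_of_vanishingIdeal_singleton_le (k := ℂ) ?_
    rw [← LinearMap.coe_toAffineMap, ← comap_affinePullback_vanishingIdeal_singleton, ← hx, ← hMv]
    exact le_rfl
  have hx0 : x ≠ 0 := fun hx0 => hv (by rw [← hLx, hx0, map_zero])
  have hYx : idealOf Y ≤ vanishingIdeal ℂ {x} := by
    rw [← hx, ← Ideal.map_le_iff_le_comap, Ideal.map_quotient_self]
    exact bot_le
  exact (h.mem_affCone_iff v).mpr
    ⟨x, mem_affCone_of_idealOf_le_vanishingIdeal h.isClosed hx0 hYx, hLx⟩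

lemma map_affTangent_le (h : IsInjectiveProjection L Q Y W) :
    (affTangent Y x).map L ≤ affTangent W (L x) := by
  rintro _ ⟨ξ, hξ, rfl⟩
  rw [mem_affTangent]
  intro f hf
  have := mem_affTangent.mp hξ _ (h.mem_idealOf_iff.mp hf)
  rwa [jacLin_affinePullback] at this

/-- Since `L` is injective on the affine cone, the fibre ideal `idealOf Y + L⁻¹(m_{L x})` lies in
no maximal ideal other than that of `x`; so a first-order comparison with the latter suffices. -/
lemma vanishingIdeal_le_jacobson (h : IsInjectiveProjection L Q Y W) (hx : x ∈ affCone Y) :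
    vanishingIdeal ℂ {x} ≤ (idealOf Y ⊔
      (vanishingIdeal ℂ {L x}).map (affinePullback L.toAffineMap)).jacobson := by
  refine le_sInf fun M ⟨hle, hM⟩ => ?_
  obtain ⟨y, rfl⟩ := isMaximal_iff_eq_vanishingIdeal_singleton.mp hM
  have hLxy : L x = L y := by
    refine eq_of_vanishingIdeal_singleton_le (k := ℂ) ?_
    rw [← LinearMap.coe_toAffineMap L, ← comap_affinePullback_vanishingIdeal_singleton _ y]
    exact Ideal.map_le_iff_le_comap.mp (le_sup_right.trans hle)
  have hy : y ≠ 0 := fun hy =>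
    (h.map_mem_affCone hx).1 (by rw [hLxy, hy, map_zero])
  rw [h.injOn hx (mem_affCone_of_idealOf_le_vanishingIdeal h.isClosed hy
    (le_sup_left.trans hle)) hLxy]

lemma vanishingIdeal_le_sup_sq (h : IsInjectiveProjection L Q Y W) (hx : x ∈ affCone Y)
    (hQ : Q ∉ affTangent Y x) : vanishingIdeal ℂ {x} ≤ (idealOf Y ⊔
      (vanishingIdeal ℂ {L x}).map (affinePullback L.toAffineMap)) ⊔ vanishingIdeal ℂ {x} ^ 2 := by
  obtain ⟨σ, l, hσ⟩ := h.exists_splitting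
  obtain ⟨g, hg, hgQ⟩ : ∃ g ∈ idealOf Y, jacLin g x Q ≠ 0 := by
    by_contra! hall
    exact hQ (mem_affTangent.mpr hall)
  refine vanishingIdeal_singleton_le fun i => ?_
  rw [← affineForm_proj]
  let c := Q i / jacLin g x Q
  let μ : Module.Dual ℂ (Fin n → ℂ) := LinearMap.proj i - c • jacLin g x
  have hμQ : μ Q = 0 := by simp [μ, c, div_mul_cancel₀ _ hgQ]
  have hμσ : (μ ∘ₗ σ) ∘ₗ L = μ := by
    refine LinearMap.ext fun v => ?_
    conv_rhs => rw [← hσ v, map_add, map_smul, hμQ, smul_zero, add_zero]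
    rfl
  have hproj : LinearMap.proj i = μ + c • jacLin g x := by simp [μ]
  rw [hproj, map_add, map_smul, smul_eq_C_mul]
  refine add_mem ?_ (Ideal.mul_mem_left _ _ ?_)
  · rw [← hμσ, ← affinePullback_affineForm]
    exact Ideal.mem_sup_left (Ideal.mem_sup_right
      (Ideal.mem_map_of_mem _ (affineForm_mem_vanishingIdeal _ _)))
  · exact sup_le_sup_right (a := idealOf Y) le_sup_left _
      (affineForm_jacLin_mem_sup_sq hg (mem_idealOf.mp hg x hx))

lemma vanishingIdeal_le_sup_map (h : IsInjectiveProjection L Q Y W) (hx : x ∈ affCone Y)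
    (hQ : Q ∉ affTangent Y x) : vanishingIdeal ℂ {x} ≤
      idealOf Y ⊔ (vanishingIdeal ℂ {L x}).map (affinePullback L.toAffineMap) := by
  have hsq := h.vanishingIdeal_le_sup_sq hx hQ
  rw [pow_two, ← smul_eq_mul] at hsq
  have := Submodule.sup_eq_sup_smul_of_le_smul_of_le_jacobson
    (IsNoetherian.noetherian (vanishingIdeal ℂ {x})) (h.vanishingIdeal_le_jacobson hx) hsq
  exact le_sup_right.trans (this.le.trans (sup_le le_rfl Ideal.mul_le_left))

lemma finite (h : IsInjectiveProjection L Q Y W) :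
    (projectionComorphism L Y).toRingHom.Finite := by
  refine RingHom.IsIntegral.to_finite h.isIntegral (RingHom.FiniteType.of_comp_finiteType
    (f := algebraMap ℂ (MvPolynomial (Fin a) ℂ)) ?_)
  have hcomp := (projectionComorphism L Y).comp_algebraMap
  exact hcomp ▸ RingHom.finiteType_algebraMap.mpr inferInstance

lemma exists_sub_projectionComorphism_mem (h : IsInjectiveProjection L Q Y W)
    (hx : x ∈ affCone Y) (hQ : Q ∉ affTangent Y x) (s : MvPolynomial (Fin n) ℂ ⧸ idealOf Y) :
    ∃ f, s - projectionComorphism L Y f ∈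
      (vanishingIdeal ℂ {L x}).map (projectionComorphism L Y).toRingHom := by
  obtain ⟨f, rfl⟩ := Ideal.Quotient.mk_surjective s
  have hf : f - C (eval x f) ∈ vanishingIdeal ℂ {x} := by simp [aeval_eq_eval]
  have hmem := Ideal.mem_map_of_mem (Ideal.Quotient.mk (idealOf Y))
    (h.vanishingIdeal_le_sup_map hx hQ hf)
  rw [Ideal.map_sup, Ideal.map_quotient_self, bot_sup_eq, map_sub] at hmem
  refine ⟨C (eval x f), ?_⟩
  have hC : projectionComorphism L Y (C (eval x f)) =
      Ideal.Quotient.mk (idealOf Y) (C (eval x f)) := AlgHom.commutes _ _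
  rw [hC]
  convert hmem using 1
  exact (Ideal.map_map _ _).symm

lemma exists_eval_mul_eq (h : IsInjectiveProjection L Q Y W) (hx : x ∈ affCone Y)
    (hQ : Q ∉ affTangent Y x) (l : Module.Dual ℂ (Fin n → ℂ)) :
    ∃ r g : MvPolynomial (Fin a) ℂ, eval (L x) r = 1 ∧
      ∀ y ∈ affCone Y, eval (L y) r * l y = eval (L y) g := by
  obtain ⟨r, g, hr, hrg⟩ := exists_sub_one_mem_and_map_mul_eq_map h.finite
    (h.exists_sub_projectionComorphism_mem hx hQ) (Ideal.Quotient.mk (idealOf Y) (affineForm 0 l))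
  refine ⟨r, g, by simpa [aeval_eq_eval, sub_eq_zero] using hr, fun y hy => ?_⟩
  have hmem : affinePullback L.toAffineMap r * affineForm 0 l - affinePullback L.toAffineMap g ∈
      idealOf Y := (Ideal.Quotient.eq).mp hrg
  simpa [eval_affinePullback, eval_affineForm, sub_eq_zero] using mem_idealOf.mp hmem y hy

lemma affTangent_le_map (h : IsInjectiveProjection L Q Y W) (hx : x ∈ affCone Y)
    (hQ : Q ∉ affTangent Y x) : affTangent W (L x) ≤ (affTangent Y x).map L := by
  obtain ⟨σ, l, hσ⟩ := h.exists_splitting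
  obtain ⟨r, g, hr, hrg⟩ := h.exists_eval_mul_eq hx hQ l
  intro ξ hξ
  let G : Fin n → MvPolynomial (Fin a) ℂ := fun i =>
    r * affineForm 0 (LinearMap.proj i ∘ₗ σ) + C (Q i) * g
  have hG {y : Fin n → ℂ} (hy : y ∈ affCone Y) :
      (fun i => eval (L y) (G i)) = eval (L y) r • y := by
    refine Eq.trans ?_ (congrArg (eval (L y) r • ·) (hσ y))
    funext i
    simp [G, eval_affineForm, ← hrg y hy]
    ring
  have hbind {f : MvPolynomial (Fin n) ℂ} (hf : f ∈ idealOf Y) : bind₁ G f ∈ idealOf W := by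
    refine mem_idealOf.mpr fun v hv => ?_
    obtain ⟨y, hy, rfl⟩ := (h.mem_affCone_iff v).mp hv
    rw [← aeval_eq_eval, aeval_bind₁, aeval_eq_eval]
    exact (congrArg (eval · f) (hG hy)).trans (eval_smul_eq_zero_of_mem_idealOf hf hy _)
  let η : Fin n → ℂ := σ ξ + jacLin r (L x) ξ • σ (L x) + jacLin g (L x) ξ • Q
  have hη : η ∈ affTangent Y x := mem_affTangent.mpr fun f hf => by
    have hjac := mem_affTangent.mp hξ _ (hbind hf)
    rw [jacLin_bind₁, hG hx, hr, one_smul] at hjac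
    convert hjac using 2
    funext i
    simp only [G, jacLin_add, jacLin_mul, jacLin_affineForm, jacLin_C, eval_affineForm, hr]
    simp [η]
    ring
  refine ⟨η - jacLin r (L x) ξ • x,
    sub_mem hη (Submodule.smul_mem _ _ (self_mem_affTangent hx)), ?_⟩
  have hLσ (z : Fin a → ℂ) : L (σ z) = z := by
    obtain ⟨y, rfl⟩ := h.surjective z
    simpa [h.map_center] using congrArg L (hσ y)
  simp [η, hLσ, h.map_center]

lemma disjoint_affTangent_ker (h : IsInjectiveProjection L Q Y W) (hQ : Q ∉ affTangent Y x) :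
    Disjoint (affTangent Y x) L.ker := by
  rw [h.ker_eq]
  exact (Submodule.disjoint_span_singleton' h.center_ne_zero).mpr hQ

lemma finrank_affTangent_map (h : IsInjectiveProjection L Q Y W) (hx : x ∈ affCone Y)
    (hQ : Q ∉ affTangent Y x) :
    Module.finrank ℂ (affTangent W (L x)) = Module.finrank ℂ (affTangent Y x) := by
  rw [le_antisymm (h.affTangent_le_map hx hQ) h.map_affTangent_le, ← LinearMap.range_domRestrict]
  exact LinearMap.finrank_range_of_inj
    (LinearMap.injective_domRestrict_iff.mpr (h.disjoint_affTangent_ker hQ))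

end IsInjectiveProjection

end InjectiveProjections

section ConeOver

variable {n a rp b : ℕ} {v : Fin n → ℂ}

lemma mem_affCone_image {L : (Fin n → ℂ) →ₗ[ℂ] (Fin a → ℂ)} {Y : Set (PrV n)}
    (hL : ∀ x ∈ affCone Y, L x ≠ 0) {v : Fin a → ℂ} :
    v ∈ affCone {z : PrV a | ∃ x ∈ Y, ∃ c : ℂ, c ≠ 0 ∧ z.rep = c • L x.rep} ↔
      ∃ x ∈ affCone Y, L x = v := by
  constructor
  · rintro ⟨hv, x, hx, c, hc, h⟩
    obtain ⟨c', hc', hcv⟩ := mk_rep_eq_smul hv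
    refine ⟨(c'⁻¹ * c) • x.rep,
      smul_mem_affCone (rep_mem_affCone.mpr hx) (mul_ne_zero (inv_ne_zero hc') hc), ?_⟩
    rw [map_smul, mul_smul, ← h, hcv, inv_smul_smul₀ hc']
  · rintro ⟨x, hx, rfl⟩
    obtain ⟨c, hc, hcx⟩ := mk_rep_eq_smul hx.1
    obtain ⟨c', hc', hcv⟩ := mk_rep_eq_smul (hL x hx)
    refine ⟨hL x hx, _, hx.2, c' * c⁻¹, mul_ne_zero hc' (inv_ne_zero hc), ?_⟩
    rw [hcv, hcx, map_smul, mul_smul, inv_smul_smul₀ hc]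

lemma mem_affCone_embPt_image (hab : n ≤ a) {Y : Set (PrV n)} {v : Fin a → ℂ} :
    v ∈ affCone (embPt hab '' Y) ↔ ∃ x ∈ affCone Y, padMap n a x = v := by
  rw [← mem_affCone_image fun x hx => padMap_ne_zero hab hx.1]
  congr! 2
  ext z
  refine exists_congr fun x => and_congr_right fun _ => ⟨?_, ?_⟩
  · rintro rfl
    exact mk_rep_eq_smul (padMap_ne_zero hab x.rep_nonzero)
  · rintro ⟨c, hc, hcz⟩
    rw [← z.mk_rep]
    exact (Projectivization.mk_eq_mk_iff' ℂ _ _ _ _).mpr ⟨c⁻¹, by rw [hcz, inv_smul_smul₀ hc]⟩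

lemma mem_affCone_joinSets_projSub {A : Set (PrV n)} {V : Submodule ℂ (Fin n → ℂ)} (hV : V ≠ ⊥) :
    v ∈ affCone (joinSets A (projSub V)) ↔
      v ≠ 0 ∧ ∃ x ∈ affCone A, ∃ y ∈ V, ∃ c : ℂ, c • x + y = v := by
  constructor
  · rintro ⟨hv, h⟩
    simp only [joinSets, mem_iUnion] at h
    obtain ⟨x, hx, y, hy, hxy⟩ := h
    rw [← x.mk_rep, ← y.mk_rep, ← mem_affCone_iff_mk_mem, mem_affCone_lineThrough] at hxy
    obtain ⟨-, c, c', hcc'⟩ := hxy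
    exact ⟨hv, x.rep, rep_mem_affCone.mpr hx, c' • y.rep, V.smul_mem _ hy, c, hcc'⟩
  · rintro ⟨hv, x, hx, y, hy, c, hcy⟩
    obtain ⟨z, hz, hz0, c', hc'⟩ : ∃ z ∈ V, z ≠ 0 ∧ ∃ c' : ℂ, c' • z = y := by
      rcases eq_or_ne y 0 with rfl | hy0
      · obtain ⟨z, hz, hz0⟩ := V.ne_bot_iff.mp hV
        exact ⟨z, hz, hz0, 0, zero_smul ℂ z⟩
      · exact ⟨y, hy, hy0, 1, one_smul ℂ y⟩
    rw [mem_affCone_iff_mk_mem hv]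
    simp only [joinSets, mem_iUnion]
    exact ⟨_, hx.2, _, (mem_affCone_projSub.mpr ⟨hz0, hz⟩).2, (mem_affCone_iff_mk_mem hv).mp
      ((mem_affCone_lineThrough hx.1 hz0).mpr ⟨hv, c, c', by rw [hc', hcy]⟩)⟩

/-- The coordinates of the ambient space of `coneOver rp b Z`: first those of the ambient space
of `Z`, then those of the vertex. -/
def coneOverCoords (rp b : ℕ) :
    (Fin (rp + b + 2) → ℂ) ≃ₗ[ℂ] (Fin (rp + 1) → ℂ) × (Fin (b + 1) → ℂ) :=
  splitCoords (finSumFinEquiv.trans (finCongr (by omega)))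

lemma coneBase_coneOverCoords : coneBase (coneOverCoords rp b) =
    LinearMap.funLeft ℂ ℂ (Fin.castLE (show rp + 1 ≤ rp + b + 2 by omega)) := rfl

lemma coneOverCoords_symm_apply_zero (z : Fin (rp + 1) → ℂ) :
    (coneOverCoords rp b).symm (z, 0) = padMap (rp + 1) (rp + b + 2) z := by
  funext j
  obtain ⟨s, rfl⟩ := (finSumFinEquiv.trans
    (finCongr (show rp + 1 + (b + 1) = rp + b + 2 by omega))).surjective j
  rw [coneOverCoords, splitCoords_symm_apply]
  rcases s with i | i
  · simpa [padMap] using fun h : rp < i => absurd i.isLt (Nat.not_lt.mpr h)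
  · simpa [padMap] using fun h => absurd h (by omega)

lemma isCone_coneOver {Z : Set (Pr rp)} (hZ : Z.Nonempty) :
    IsCone (coneOverCoords rp b) Z (coneOver rp b Z) := by
  intro v
  have hV : (coneBase (coneOverCoords rp b)).ker ≠ ⊥ := by
    rw [← Submodule.one_le_finrank_iff, finrank_ker_coneBase]
    omega
  rw [coneOver, ← coneBase_coneOverCoords, mem_affCone_joinSets_projSub hV,
    and_congr_right_iff]
  refine fun _ => ⟨?_, fun h => ?_⟩
  · rintro ⟨x, hx, y, hy, c, rfl⟩
    obtain ⟨z, hz, rfl⟩ := (mem_affCone_embPt_image _).mp hx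
    have hbase : (coneOverCoords rp b (c • padMap (rp + 1) (rp + b + 2) z + y)).1 = c • z := by
      rw [← coneBase_apply, map_add, LinearMap.mem_ker.mp hy, ← coneOverCoords_symm_apply_zero,
        map_smul, coneBase_apply, LinearEquiv.apply_symm_apply, add_zero]
    rw [hbase]
    rcases eq_or_ne c 0 with rfl | hc
    · exact .inl (zero_smul ℂ z)
    · exact .inr (smul_mem_affCone hz hc)
  · obtain ⟨z, hz, c, hcz⟩ : ∃ z ∈ affCone Z, ∃ c : ℂ, c • z = (coneOverCoords rp b v).1 := by
      rcases h with h | h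
      · obtain ⟨z, hz⟩ := hZ
        exact ⟨z.rep, rep_mem_affCone.mpr hz, 0, by rw [h, zero_smul]⟩
      · exact ⟨_, h, 1, one_smul ℂ _⟩
    refine ⟨_, (mem_affCone_embPt_image _).mpr ⟨z, hz, rfl⟩, v - c • padMap _ _ z, ?_, c,
      add_sub_cancel _ _⟩
    rw [LinearMap.mem_ker, map_sub, map_smul, ← coneOverCoords_symm_apply_zero, coneBase_apply,
      coneBase_apply, LinearEquiv.apply_symm_apply, hcz, sub_self]

end ConeOver

section SmoothPoints

variable {n m d : ℕ} {Y : Set (PrV n)} {v q : Fin n → ℂ} {f : MvPolynomial (Fin n) ℂ}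

lemma pdim_eq_natCast_iff (hY : IsClosed Y) (hirr : IsIrreducible Y) :
    pdim Y = ((m : ℕ∞) : WithBot ℕ∞) ↔
      ringKrullDim (MvPolynomial (Fin n) ℂ ⧸ idealOf Y) = (m + 1 : ℕ) := by
  rw [← pdim_add_one_eq_ringKrullDim hY hirr]
  exact (ENat.WithBot.add_one_cancel (b := ((m : ℕ∞) : WithBot ℕ∞))).symm

lemma isSmoothPt_mk_iff (hY : pdim Y = ((m : ℕ∞) : WithBot ℕ∞)) (hv : v ≠ 0) :
    IsSmoothPt Y (.mk ℂ v hv) ↔ Module.finrank ℂ (affTangent Y v) = m + 1 := by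
  obtain ⟨c, hc, hcv⟩ := mk_rep_eq_smul hv
  rw [IsSmoothPt, hcv, affTangent_smul _ _ hc, hY]
  exact_mod_cast Iff.rfl

lemma IsSmoothSet.finrank_affTangent (hsm : IsSmoothSet Y)
    (hdim : pdim Y = ((m : ℕ∞) : WithBot ℕ∞)) (hv : v ∈ affCone Y) :
    Module.finrank ℂ (affTangent Y v) = m + 1 :=
  (isSmoothPt_mk_iff hdim hv.1).mp (hsm _ hv.2)

lemma IsSmoothSet.notMem_affTangent_of_eval_ne_zero (hsm : IsSmoothSet Y) (hcl : IsClosed Y)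
    (hirr : IsIrreducible Y) (hdim : pdim Y = ((m : ℕ∞) : WithBot ℕ∞)) (hf : f.IsHomogeneous d)
    (hfY : ∀ y ∈ affCone Y, ∀ z ∈ affCone Y, ∀ a c : ℂ, eval (a • y + c • z) f = 0)
    (hq : eval q f ≠ 0) (hv : v ∈ affCone Y) : q ∉ affTangent Y v := fun hqv =>
  hq <| eval_eq_zero_of_mem_affTangent (isPrime_idealOf hirr) hv (hsm.finrank_affTangent hdim hv)
    ((pdim_eq_natCast_iff hcl hirr).mp hdim) hf
    (fun y hy => by simpa [sub_eq_add_neg] using hfY y hy v hv 1 (-1)) hqv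

end SmoothPoints

section ConeProjections

variable {n a p k m : ℕ} {L : (Fin n → ℂ) →ₗ[ℂ] (Fin a → ℂ)} {Q x : Fin n → ℂ}
  {Z : Set (PrV p)} {Y : Set (PrV n)} {W : Set (PrV a)}

lemma map_ne_zero_of_mem_affCone (h0 : ∀ y ∈ Y, L y.rep ≠ 0) (hx : x ∈ affCone Y) : L x ≠ 0 := by
  obtain ⟨c, -, hcx⟩ := mk_rep_eq_smul hx.1
  have := h0 _ hx.2
  rw [hcx, map_smul] at this
  exact (smul_ne_zero_iff.mp this).2

lemma injOn_affCone (h0 : ∀ y ∈ Y, L y.rep ≠ 0)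
    (hinj : ∀ y ∈ Y, ∀ z ∈ Y, (∃ c : ℂ, L y.rep = c • L z.rep) → y = z) :
    InjOn L (affCone Y) := by
  intro y hy z hz hyz
  obtain ⟨c, -, hcy⟩ := mk_rep_eq_smul hy.1
  obtain ⟨c', hc', hcz⟩ := mk_rep_eq_smul hz.1
  have hmk := hinj _ hy.2 _ hz.2 ⟨c * c'⁻¹, by
    rw [hcy, hcz, map_smul, map_smul, hyz, mul_smul, inv_smul_smul₀ hc']⟩
  obtain ⟨s, rfl⟩ := (Projectivization.mk_eq_mk_iff' ℂ _ _ hy.1 hz.1).mp hmk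
  have hs : s • L z = (1 : ℂ) • L z := by rw [← map_smul, hyz, one_smul]
  rw [smul_left_injective ℂ (map_ne_zero_of_mem_affCone h0 hz) hs, one_smul]

lemma ker_eq_span_singleton_of_surjective {K : Type*} [Field K]
    {L : (Fin (a + 1) → K) →ₗ[K] (Fin a → K)} {Q : Fin (a + 1) → K}
    (hL : Function.Surjective L) (hQ : Q ≠ 0) (hLQ : L Q = 0) : L.ker = Submodule.span K {Q} := by
  refine (Submodule.eq_of_le_of_finrank_le ?_ ?_).symm
  · rwa [Submodule.span_singleton_le_iff_mem, LinearMap.mem_ker]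
  · have := L.finrank_range_add_finrank_ker
    rw [LinearMap.range_eq_top.mpr hL, finrank_top, Module.finrank_fin_fun,
      Module.finrank_fin_fun] at this
    rw [finrank_span_singleton hQ]
    omega

lemma isInjectiveProjection_image {Y : Set (PrV (a + 1))}
    {L : (Fin (a + 1) → ℂ) →ₗ[ℂ] (Fin a → ℂ)} {Q : Fin (a + 1) → ℂ} (hcl : IsClosed Y)
    (hirr : IsIrreducible Y) (hL : Function.Surjective L) (hQ : Q ≠ 0) (hLQ : L Q = 0)
    (h0 : ∀ y ∈ Y, L y.rep ≠ 0)
    (hinj : ∀ y ∈ Y, ∀ z ∈ Y, (∃ c : ℂ, L y.rep = c • L z.rep) → y = z) :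
    IsInjectiveProjection L Q Y {w | ∃ y ∈ Y, ∃ c : ℂ, c ≠ 0 ∧ w.rep = c • L y.rep} where
  isClosed := hcl
  isIrreducible := hirr
  surjective := hL
  ker_eq := ker_eq_span_singleton_of_surjective hL hQ hLQ
  center_ne_zero := hQ
  mem_affCone_iff _ := mem_affCone_image fun _ => map_ne_zero_of_mem_affCone h0
  injOn := injOn_affCone h0 hinj

lemma IsInjectiveProjection.pdim_eq (h : IsInjectiveProjection L Q Y W)
    (hY : pdim Y = ((m : ℕ∞) : WithBot ℕ∞)) : pdim W = ((m : ℕ∞) : WithBot ℕ∞) := by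
  rw [pdim_eq_natCast_iff h.isClosed_image h.isIrreducible_image, h.ringKrullDim_eq]
  exact (pdim_eq_natCast_iff h.isClosed h.isIrreducible).mp hY

lemma IsCone.pdim_eq {e : Fin p ⊕ Fin k ≃ Fin n} (h : IsCone (splitCoords e) Z Y)
    (hcl : IsClosed Z) (hirr : IsIrreducible Z) (hdim : pdim Z = ((m : ℕ∞) : WithBot ℕ∞)) :
    pdim Y = ((m + k : ℕ) : ℕ∞) := by
  rw [pdim_eq_natCast_iff (h.isClosed hirr.nonempty hcl) (h.isIrreducible hirr),
    h.ringKrullDim_eq hirr.nonempty, (pdim_eq_natCast_iff hcl hirr).mp hdim]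
  exact_mod_cast Nat.add_right_comm m 1 k

variable {S : (Fin n → ℂ) ≃ₗ[ℂ] (Fin p → ℂ) × (Fin k → ℂ)}

namespace IsInjectiveProjection

lemma affTangent_map_eq_top (h : IsInjectiveProjection L Q Y W) (hY : affTangent Y x = ⊤) :
    affTangent W (L x) = ⊤ := by
  rw [eq_top_iff, ← LinearMap.range_eq_top.mpr h.surjective, ← Submodule.map_top, ← hY]
  exact h.map_affTangent_le

lemma isSmoothPt_map_iff (h : IsInjectiveProjection L Q Y W) (hc : IsCone S Z Y)
    (hne : Z.Nonempty) (hnd : NondegenerateSet Z) (hsm : IsSmoothSet Z)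
    (hZ : pdim Z = ((m : ℕ∞) : WithBot ℕ∞)) (hW : pdim W = ((m + k : ℕ) : ℕ∞))
    (ha : m + k + 1 ≠ a) (hQ : ∀ z ∈ affCone Z, coneBase S Q ∉ affTangent Z z)
    (hx : x ∈ affCone Y) (hLx : L x ≠ 0) :
    IsSmoothPt W (.mk ℂ (L x) hLx) ↔ (S x).1 ∈ affCone Z := by
  rw [isSmoothPt_mk_iff hW]
  rcases ((hc x).mp hx).2 with hx0 | hxZ
  · rw [h.affTangent_map_eq_top (hc.affTangent_eq_top hne hnd hx0), finrank_top,
      Module.finrank_fin_fun]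
    exact iff_of_false ha.symm fun hxZ => hxZ.1 hx0
  · have hQx : Q ∉ affTangent Y x := by
      rw [hc.affTangent_eq_comap hxZ]
      exact hQ _ hxZ
    rw [h.finrank_affTangent_map hx hQx, hc.finrank_affTangent hxZ,
      hsm.finrank_affTangent hZ hxZ]
    exact iff_of_true (Nat.add_right_comm m 1 k) hxZ

lemma singLocus_eq_projSub (h : IsInjectiveProjection L Q Y W) (hc : IsCone S Z Y)
    (hne : Z.Nonempty) (hnd : NondegenerateSet Z) (hsm : IsSmoothSet Z)
    (hZ : pdim Z = ((m : ℕ∞) : WithBot ℕ∞)) (hW : pdim W = ((m + k : ℕ) : ℕ∞))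
    (ha : m + k + 1 ≠ a) (hQ : ∀ z ∈ affCone Z, coneBase S Q ∉ affTangent Z z) :
    singLocus W = projSub ((coneBase S).ker.map L) := by
  have hsmooth {x} (hx : x ∈ affCone Y) (hLx : L x ≠ 0) :=
    h.isSmoothPt_map_iff hc hne hnd hsm hZ hW ha hQ hx hLx
  refine affCone_injective (Set.ext fun v => ?_)
  rw [mem_affCone_projSub]
  constructor
  · rintro ⟨hv, hvW, hvs⟩
    obtain ⟨x, hx, rfl⟩ := (h.mem_affCone_iff v).mp ⟨hv, hvW⟩
    have hxZ : (S x).1 ∉ affCone Z := fun hxZ => hvs ⟨hvW, (hsmooth hx hv).mpr hxZ⟩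
    exact ⟨hv, x, ((hc x).mp hx).2.resolve_right hxZ, rfl⟩
  · rintro ⟨hv, x, hx0, rfl⟩
    have hx : x ∈ affCone Y := (hc x).mpr ⟨fun hx => hv (by rw [hx, map_zero]), .inl hx0⟩
    exact ⟨hv, (h.map_mem_affCone hx).2, fun hs => ((hsmooth hx hv).mp hs.2).1 hx0⟩

lemma pdim_singLocus {b : ℕ} {S : (Fin n → ℂ) ≃ₗ[ℂ] (Fin p → ℂ) × (Fin (b + 1) → ℂ)}
    (h : IsInjectiveProjection L Q Y W) (hc : IsCone S Z Y)
    (hne : Z.Nonempty) (hnd : NondegenerateSet Z) (hsm : IsSmoothSet Z)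
    (hZ : pdim Z = ((m : ℕ∞) : WithBot ℕ∞)) (hW : pdim W = ((m + (b + 1) : ℕ) : ℕ∞))
    (ha : m + (b + 1) + 1 ≠ a) (hQ : ∀ z ∈ affCone Z, coneBase S Q ∉ affTangent Z z) :
    pdim (singLocus W) = ((b : ℕ∞) : WithBot ℕ∞) := by
  have hinj : Disjoint (coneBase S).ker L.ker := by
    refine LinearMap.disjoint_ker.mpr fun x hx hLx => ?_
    by_contra hx0
    exact (h.map_mem_affCone ((hc x).mpr ⟨hx0, .inl hx⟩)).1 hLx
  rw [h.singLocus_eq_projSub hc hne hnd hsm hZ hW ha hQ]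
  refine pdim_projSub _ ?_
  rw [← LinearMap.range_domRestrict, LinearMap.finrank_range_of_inj
    (LinearMap.injective_domRestrict_iff.mpr hinj), finrank_ker_coneBase]

end IsInjectiveProjection

end ConeProjections

section GenericProjections

variable {σ : Type} {n d p : ℕ} {R : Type*} [CommRing R]

lemma isTopologicalBasis_affTop (σ : Type) : @TopologicalSpace.IsTopologicalBasis _ (affTop σ)
    {U | ∃ f : MvPolynomial σ ℂ, U = {v | eval v f ≠ 0}} := by
  let := affTop σ
  refine ⟨?_, Set.sUnion_eq_univ_iff.mpr fun x => ⟨_, ⟨1, rfl⟩, by simp⟩, rfl⟩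
  rintro _ ⟨f, rfl⟩ _ ⟨g, rfl⟩ x hx
  exact ⟨_, ⟨f * g, rfl⟩, by simpa using hx, fun y hy => by simpa using hy⟩

lemma genericAff_eval_ne_zero {g : MvPolynomial σ ℂ} (hg : g ≠ 0) :
    GenericAff fun v => eval v g ≠ 0 := by
  let := affTop σ
  refine ⟨_, (isTopologicalBasis_affTop σ).isOpen ⟨g, rfl⟩,
    (isTopologicalBasis_affTop σ).dense_iff.mpr ?_, fun v hv => hv⟩
  rintro _ ⟨f, rfl⟩ ⟨v, hv⟩
  have hf : f ≠ 0 := fun hf => hv (by rw [hf, map_zero])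
  have hfg : ¬∀ x, eval x (f * g) = eval x 0 := mt MvPolynomial.funext (mul_ne_zero hf hg)
  simpa [Set.Nonempty, not_or] using hfg

lemma GenericAff.mono {P P' : (σ → ℂ) → Prop} (h : GenericAff P) (hPP' : ∀ v, P v → P' v) :
    GenericAff P' := by
  obtain ⟨U, hU, hdense, hP⟩ := h
  exact ⟨U, hU, hdense, fun v hv => hPP' v (hP v hv)⟩

/-- The vector of signed maximal minors of an `n × (n + 1)` matrix `w`, which spans the kernel
of `w` when `w` has full rank. The `j`-th minor is encoded as the determinant of `w` extended by
the row `Pi.single j 1`. -/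
def kernelVector (w : Fin n × Fin (n + 1) → R) (j : Fin (n + 1)) : R :=
  (Matrix.of (Fin.snoc (α := fun _ => Fin (n + 1) → R) (fun i k => w (i, k)) (Pi.single j 1))).det

lemma kernelVector_eq_adjugate (M : Matrix (Fin (n + 1)) (Fin (n + 1)) R) (j : Fin (n + 1)) :
    kernelVector (fun i => M i.1.castSucc i.2) j = M.adjugate j (Fin.last n) := by
  rw [kernelVector, Matrix.adjugate_apply]
  congr 1
  ext i k
  cases i using Fin.lastCases <;> simp [Fin.castSucc_ne_last]

lemma map_kernelVector {R' : Type*} [CommRing R'] (φ : R →+* R') (w : Fin n × Fin (n + 1) → R)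
    (j : Fin (n + 1)) : φ (kernelVector w j) = kernelVector (φ ∘ w) j := by
  rw [kernelVector, RingHom.map_det, kernelVector]
  congr 1
  ext i k
  cases i using Fin.lastCases <;> simp [Pi.single_apply, apply_ite φ]

lemma matLin_kernelVector (w : Fin n × Fin (n + 1) → ℂ) : matLin w (kernelVector w) = 0 := by
  let M : Matrix (Fin (n + 1)) (Fin (n + 1)) ℂ :=
    Matrix.of (Fin.snoc (α := fun _ => Fin (n + 1) → ℂ) (fun i k => w (i, k)) 0)
  have hw : w = fun i => M i.1.castSucc i.2 := by simp [M]
  funext i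
  have h := congrFun₂ (Matrix.mul_adjugate M) i.castSucc (Fin.last n)
  rw [Matrix.smul_apply, Matrix.one_apply_ne (Fin.castSucc_ne_last i), smul_zero,
    Matrix.mul_apply] at h
  rw [hw]
  simpa [matLin, Matrix.mulVec, dotProduct, kernelVector_eq_adjugate] using h

lemma exists_kernelVector_eq_smul {v : Fin (n + 1) → ℂ} (hv : v ≠ 0) :
    ∃ (w : Fin n × Fin (n + 1) → ℂ) (c : ℂ), c ≠ 0 ∧ kernelVector w = c • v := by
  obtain ⟨A, hA⟩ := SeparatingDual.exists_continuousLinearEquiv_apply_eq (R := ℂ) hv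
    (y := (Pi.single (Fin.last n) 1 : Fin (n + 1) → ℂ)) (by simp)
  let M := LinearMap.toMatrix' A.toLinearEquiv.toLinearMap
  have hM : M.mulVec v = Pi.single (Fin.last n) 1 := by
    rw [← hA, LinearMap.toMatrix'_mulVec, LinearEquiv.coe_coe,
      ContinuousLinearEquiv.coe_toLinearEquiv]
  have hdet : M.det ≠ 0 := by
    rw [LinearMap.det_toMatrix']
    exact A.toLinearEquiv.isUnit_det'.ne_zero
  refine ⟨_, M.det, hdet, funext fun j => (kernelVector_eq_adjugate M j).trans ?_⟩
  have hadj : M.adjugate.mulVec (M.mulVec v) = M.det • v := by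
    rw [Matrix.mulVec_mulVec, Matrix.adjugate_mul, Matrix.smul_mulVec, Matrix.one_mulVec]
  rw [← hadj, hM, Matrix.mulVec_single_one, Matrix.col_apply]

lemma genericAff_eval_map_kernelVector_ne_zero {f : MvPolynomial (Fin p) ℂ}
    (hf : f.IsHomogeneous d) {φ : (Fin (n + 1) → ℂ) →ₗ[ℂ] (Fin p → ℂ)}
    (hφ : ∃ v, eval (φ v) f ≠ 0) :
    GenericAff fun w : Fin n × Fin (n + 1) → ℂ => eval (φ (kernelVector w)) f ≠ 0 := by
  obtain ⟨v, hv0, hv⟩ : ∃ v, v ≠ 0 ∧ eval (φ v) f ≠ 0 := by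
    have hne : X 0 * affinePullback φ.toAffineMap f ≠ 0 := by
      refine mul_ne_zero (X_ne_zero _) fun h => ?_
      obtain ⟨v, hv⟩ := hφ
      exact hv (by rw [← LinearMap.coe_toAffineMap, ← eval_affinePullback, h, map_zero])
    by_contra! hall
    refine hne (MvPolynomial.funext fun v => ?_)
    rcases eq_or_ne v 0 with rfl | hv
    · simp
    · simp [eval_affinePullback, hall v hv]
  let g : MvPolynomial (Fin n × Fin (n + 1)) ℂ :=
    bind₁ (kernelVector X) (affinePullback φ.toAffineMap f)
  have hg (w) : eval w g = eval (φ (kernelVector w)) f := by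
    have hw : (fun j => eval w (kernelVector X j)) = kernelVector w := by
      funext j
      rw [map_kernelVector]
      congr 1
      funext i
      exact eval_X i
    rw [← LinearMap.coe_toAffineMap, ← eval_affinePullback, ← hw]
    exact eval₂Hom_bind₁ _ _ _ _
  refine (genericAff_eval_ne_zero (g := g) fun h0 => ?_).mono fun w hw => hg w ▸ hw
  obtain ⟨w, c, hc, hw⟩ := exists_kernelVector_eq_smul hv0
  have := hg w
  rw [h0, map_zero, hw, map_smul, ← aeval_eq_eval] at this
  exact mul_ne_zero (pow_ne_zero d hc) hv
    ((aeval_mul_of_isHomogeneous hf c (φ v)).symm.trans this.symm)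

end GenericProjections

/-- **(Remark 3: sharpness of Corollary 4.)**  Let `Z ⊆ ℙ^{r'}` be a smooth Severi
variety (smooth, irreducible, nondegenerate, projectable, `dim Z = (2/3)(r'-2)`, i.e.
`3 dim Z + 4 = 2 r'`), let `b ≥ 0`, set `N = r' + b`, let `Z' ⊆ ℙ^{N+1}` be the cone over
`Z` with vertex a linear `ℙ^b`, and let `X ⊆ ℙ^N` be the generic (isomorphic) projection
of `Z'`.  Then `dim X = (1/3)(2N + b - 1)` (indeed `dim X = dim Z + b + 1` and
`3 (dim Z + b + 1) = 2N + b - 1`), `dim Sing(X) = b`, and `X` is not linearly normal.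
In particular the bound `dim X > (1/3)(2N + b - 1)` in Corollary 4 is sharp. -/
theorem severi_cone_projection_not_linearly_normal
    (rp b m : ℕ) (Z : Set (Pr rp))
    (hcl : IsClosed Z) (hirr : IsIrreducible Z) (hsm : IsSmoothSet Z)
    (hnd : NondegenerateSet Z)
    (hproj : secantVariety Z ≠ Set.univ)
    (hdim : pdim Z = ((m : ℕ∞) : WithBot ℕ∞))
    (hseveri : 3 * m + 4 = 2 * rp) :
    GenericAff fun w : Fin (rp + b + 1) × Fin (rp + b + 2) → ℂ =>
      (Function.Surjective (matLin w) ∧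
        (∀ x ∈ coneOver rp b Z, matLin w x.rep ≠ 0) ∧
        (∀ x ∈ coneOver rp b Z, ∀ y ∈ coneOver rp b Z,
          (∃ c : ℂ, matLin w x.rep = c • matLin w y.rep) → x = y)) →
      pdim (projImage w (coneOver rp b Z)) = (((m + b + 1 : ℕ) : ℕ∞) : WithBot ℕ∞) ∧
      3 * (m + b + 1) = 2 * (rp + b) + b - 1 ∧
      pdim (singLocus (projImage w (coneOver rp b Z))) = ((b : ℕ∞) : WithBot ℕ∞) ∧
      ¬ LinearlyNormal (projImage w (coneOver rp b Z)) := by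
  obtain ⟨d, f, hf, ⟨q, hq⟩, hfZ⟩ :=
    hnd.exists_isHomogeneous_eval_add_smul_eq_zero (by omega) hirr.nonempty hproj
  obtain ⟨v, rfl⟩ := coneBase_surjective (S := coneOverCoords rp b) q
  refine (genericAff_eval_map_kernelVector_ne_zero hf ⟨v, hq⟩).mono ?_
  rintro w hQf ⟨hsurj, h0, hinj⟩
  have hcone : IsCone (coneOverCoords rp b) Z (coneOver rp b Z) := isCone_coneOver hirr.nonempty
  have hcl' : IsClosed (coneOver rp b Z) := hcone.isClosed hirr.nonempty hcl
  have hirr' : IsIrreducible (coneOver rp b Z) := hcone.isIrreducible hirr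
  have hQ : ∀ z ∈ affCone Z, coneBase (coneOverCoords rp b) (kernelVector w) ∉ affTangent Z z :=
    fun z hz => hsm.notMem_affTangent_of_eval_ne_zero hcl hirr hdim hf hfZ hQf hz
  have hQ0 : kernelVector w ≠ 0 := by
    obtain ⟨z, hz⟩ := hirr.nonempty
    exact fun h => hQ _ (rep_mem_affCone.mpr hz) (by rw [h, map_zero]; exact zero_mem _)
  have hW := isInjectiveProjection_image hcl' hirr' hsurj hQ0 (matLin_kernelVector w) h0 hinj
  have hdimW := hW.pdim_eq (hcone.pdim_eq hcl hirr hdim)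
  exact ⟨hdimW, by omega,
    hW.pdim_singLocus hcone hirr.nonempty hnd hsm hdim hdimW (by omega) hQ,
    fun hln => hln ⟨_, hcl', hirr', hcone.nondegenerateSet hnd, _, hsurj, h0, rfl, hinj⟩⟩

end
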